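/- arXiv:1604.03387 — 3 statements merged into one kernel-verified Lean document; each statement's English description precedes it below -/
import Mathlib

section
/- Let U ⊆ ℝ^d be open and convex, let ψ : U → ℝ be C³ and convex, and let ε ∈ (0,1). Let (B(x_i, r_i))_{i∈I} be a countable family of pairwise disjoint open balls contained in U. Suppose that for each i there is a constant λ̲_i ∈ (0,1] such that ⟨Hess ψ(x) u, u⟩ ≥ λ̲_i |u|² for all x ∈ B(x_i, r_i) and all u ∈ ℝ^d, and such that (sup_{x ∈ B(x_i,r_i)} ‖D³ψ(x)‖) · r_i < (ε/4)·λ̲_i², where ‖D³ψ(x)‖ = sup_{|u|=|v|=|w|=1} |D³ψ(x)[u,v,w]|. Define S on ⋃_i B(x_i, r_i) by S(x) = (1+ε)∇ψ(x_i) + Hess ψ(x_i)(x − x_i) for x ∈ B(x_i, r_i), and S_t = (1−t)·id + t·S for t ∈ [0,1]. Then for every t ∈ [0,1], S_t is injective on ⋃_i B(x_i, r_i), and for all i ≠ j, dist(S_t(B(x_i,r_i)), S_t(B(x_j,r_j))) ≥ (ε t/2)(λ̲_i² r_i + λ̲_j² r_j). -/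
open Set Metric
open scoped RealInnerProductSpace

/-!
Put `k = 1 + ε`. On `B(c, r)` the droplet map is `k` times the linearization of `T = ∇ψ` at `c`,
evaluated at the contracted point `w = c + k⁻¹ (y - c)`, so it differs from `k T(w)` by at most
`M r`, where `M` bounds `‖D²T‖ r`. The contracted ball leaves a margin `(1 - k⁻¹) r` inside
`B(c, r)`; moving `w` by that margin in a unit direction `-e` decreases `k ⟪T(w), e⟫` by at least
`(k - 1) λ r`, by strong monotonicity. For two disjoint balls and `e` the direction of `w - w'`,
the two points moved towards each other still lie in the right order on a line parallel to `e`,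
so monotonicity of `T` compares them and both gains survive. Finally `⟪y - y', e⟫ ≥ 0`, so the
separation in direction `e` passes to the interpolants.
-/

open scoped NNReal

section StrongMonotone

variable {E : Type*} [NormedAddCommGroup E] [InnerProductSpace ℝ E]

/-- Strong monotonicity on `s`, with modulus `m`, of a vector field `T` in the sense of monotone
operator theory. The modulus `m = 0` is allowed and gives plain monotonicity, the property that
gradients of convex functions have. -/
def StrongMonotoneOn (m : ℝ) (T : E → E) (s : Set E) : Prop :=
  ∀ ⦃p⦄, p ∈ s → ∀ ⦃q⦄, q ∈ s → m * ‖p - q‖ ^ 2 ≤ ⟪T p - T q, p - q⟫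

variable {T : E → E} {s : Set E} {m : ℝ}

lemma StrongMonotoneOn.mul_le_inner_sub (hT : StrongMonotoneOn m T s) {p e : E} {δ : ℝ}
    (hδ : 0 ≤ δ) (he : ‖e‖ = 1) (hp : p ∈ s) (hpe : p + δ • e ∈ s) :
    m * δ ≤ ⟪T (p + δ • e) - T p, e⟫ := by
  rcases hδ.eq_or_lt with rfl | hδ
  · simp
  · have h := hT hpe hp
    rw [add_sub_cancel_left, norm_smul, he, mul_one, Real.norm_of_nonneg hδ.le,
      real_inner_smul_right] at h
    exact le_of_mul_le_mul_left (by linarith) hδ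

lemma StrongMonotoneOn.injOn (hT : StrongMonotoneOn m T s) (hm : 0 < m) : InjOn T s := by
  intro p hp q hq hpq
  have h : m * ‖p - q‖ ^ 2 ≤ 0 := by simpa [hpq] using hT hp hq
  have hsq : ‖p - q‖ ^ 2 = 0 := (nonpos_of_mul_nonpos_right h hm).antisymm (sq_nonneg _)
  exact sub_eq_zero.1 (norm_eq_zero.1 (sq_eq_zero_iff.1 hsq))

lemma StrongMonotoneOn.interpolant (hT : StrongMonotoneOn m T s) {t : ℝ} (ht : 0 ≤ t) :
    StrongMonotoneOn ((1 - t) + t * m) (fun y => (1 - t) • y + t • T y) s := by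
  intro p hp q hq
  calc ((1 - t) + t * m) * ‖p - q‖ ^ 2
      = (1 - t) * ‖p - q‖ ^ 2 + t * (m * ‖p - q‖ ^ 2) := by ring
    _ ≤ (1 - t) * ‖p - q‖ ^ 2 + t * ⟪T p - T q, p - q⟫ := by gcongr; exact hT hp hq
    _ = ⟪(1 - t) • (p - q) + t • (T p - T q), p - q⟫ := by
      rw [inner_add_left, real_inner_smul_left, real_inner_smul_left, real_inner_self_eq_norm_sq]
    _ = ⟪((1 - t) • p + t • T p) - ((1 - t) • q + t • T q), p - q⟫ := by
      congr 1; module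

lemma strongMonotoneOn_of_fderiv (hs : Convex ℝ s) (hT : ∀ x ∈ s, DifferentiableAt ℝ T x)
    (hm : ∀ x ∈ s, ∀ u : E, m * ‖u‖ ^ 2 ≤ ⟪fderiv ℝ T x u, u⟫) : StrongMonotoneOn m T s := by
  intro p hp q hq
  let φ : ℝ → ℝ := fun a => ⟪T (AffineMap.lineMap q p a), p - q⟫
  have hmem : ∀ a ∈ Icc (0 : ℝ) 1, AffineMap.lineMap q p a ∈ s := fun a ha =>
    hs.lineMap_mem hq hp ha
  have hφ : ∀ a ∈ Icc (0 : ℝ) 1,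
      HasDerivAt φ ⟪fderiv ℝ T (AffineMap.lineMap q p a) (p - q), p - q⟫ a := fun a ha => by
    have hline : HasDerivAt (fun a : ℝ => T (AffineMap.lineMap q p a))
        (fderiv ℝ T (AffineMap.lineMap q p a) (p - q)) a :=
      (hT _ (hmem a ha)).hasFDerivAt.comp_hasDerivAt a AffineMap.hasDerivAt_lineMap
    simpa using hline.inner ℝ (hasDerivAt_const a (p - q))
  obtain ⟨a, ha, hslope⟩ := exists_hasDerivAt_eq_slope φ _ one_pos
    (fun a ha => (hφ a ha).continuousAt.continuousWithinAt)
    (fun a ha => hφ a (Ioo_subset_Icc_self ha))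
  have h := hm _ (hmem a (Ioo_subset_Icc_self ha)) (p - q)
  rw [hslope] at h
  simpa [φ, ← inner_sub_left] using h

lemma strongMonotoneOn_gradient_of_convexOn [CompleteSpace E] {f : E → ℝ}
    (hf : ∀ x ∈ s, DifferentiableAt ℝ f x) (hconv : ConvexOn ℝ s f) :
    StrongMonotoneOn 0 (gradient f) s := by
  intro p hp q hq
  let line : ℝ →ᵃ[ℝ] E := AffineMap.lineMap q p
  have hφ : ConvexOn ℝ (line ⁻¹' s) (f ∘ line) := hconv.comp_affineMap line
  have h0 : (0 : ℝ) ∈ line ⁻¹' s := by simpa [line] using hq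
  have h1 : (1 : ℝ) ∈ line ⁻¹' s := by simpa [line] using hp
  have hderiv : ∀ a ∈ line ⁻¹' s, HasDerivAt (f ∘ line) ⟪gradient f (line a), p - q⟫ a :=
    fun a ha => by
      simpa [gradient] using
        (hf _ ha).hasFDerivAt.comp_hasDerivAt a AffineMap.hasDerivAt_lineMap
  have hle := (hφ.le_slope_of_hasDerivAt h0 h1 one_pos (hderiv 0 h0)).trans
    (hφ.slope_le_of_hasDerivAt h0 h1 one_pos (hderiv 1 h1))
  simpa [line, inner_sub_left] using hle

end StrongMonotone

section Linearization

lemma approximatesLinearOn_ball_of_norm_fderiv_fderiv_mul_le {E F : Type*}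
    [NormedAddCommGroup E] [NormedSpace ℝ E] [NormedAddCommGroup F] [NormedSpace ℝ F]
    {T : E → F} {x : E} {r : ℝ} {M : ℝ≥0} (hT : ContDiffOn ℝ 2 T (ball x r))
    (hM : ∀ y ∈ ball x r, ‖fderiv ℝ (fderiv ℝ T) y‖ * r ≤ M) :
    ApproximatesLinearOn T (fderiv ℝ T x) (ball x r) M := by
  have hdiff : ∀ y ∈ ball x r, DifferentiableAt ℝ T y := fun y hy =>
    (hT.contDiffAt (isOpen_ball.mem_nhds hy)).differentiableAt two_ne_zero
  have hdiff' : ∀ y ∈ ball x r, DifferentiableAt ℝ (fderiv ℝ T) y := fun y hy =>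
    ((hT.fderiv_of_isOpen isOpen_ball (m := 1) (by norm_num)).contDiffAt
      (isOpen_ball.mem_nhds hy)).differentiableAt one_ne_zero
  have hbound : ∀ y ∈ ball x r, ‖fderiv ℝ T y - fderiv ℝ T x‖ ≤ M := fun y hy => by
    have hr : 0 < r := pos_of_mem_ball hy
    calc ‖fderiv ℝ T y - fderiv ℝ T x‖
        ≤ M / r * ‖y - x‖ :=
          (convex_ball x r).norm_image_sub_le_of_norm_fderiv_le hdiff'
            (fun z hz => (le_div_iff₀ hr).2 (hM z hz)) (mem_ball_self hr) hy
      _ ≤ M / r * r := by gcongr; exact (mem_ball_iff_norm.1 hy).le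
      _ = M := div_mul_cancel₀ _ hr.ne'
  exact fun p hp q hq =>
    (convex_ball x r).norm_image_sub_le_of_norm_fderiv_le' hdiff hbound hq hp

variable {E : Type*} [NormedAddCommGroup E] [InnerProductSpace ℝ E] [CompleteSpace E]

/-- The Riesz isometry from the dual of a real Hilbert space to the space, as a linear rather than
conjugate-linear map, so that the chain rule over `ℝ` applies to `gradient f = riesz ∘ fderiv f`. -/
noncomputable def realRieszIsometry (E : Type*) [NormedAddCommGroup E] [InnerProductSpace ℝ E]
    [CompleteSpace E] : StrongDual ℝ E ≃ₗᵢ[ℝ] E :=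
  (InnerProductSpace.toDual ℝ E).symm

lemma gradient_eq_realRieszIsometry_comp_fderiv (f : E → ℝ) :
    gradient f = realRieszIsometry E ∘ fderiv ℝ f := rfl

lemma norm_fderiv_fderiv_gradient (f : E → ℝ) (x : E) :
    ‖fderiv ℝ (fderiv ℝ (gradient f)) x‖ = ‖iteratedFDeriv ℝ 3 f x‖ := by
  rw [← norm_iteratedFDeriv_one, norm_iteratedFDeriv_fderiv,
    gradient_eq_realRieszIsometry_comp_fderiv, LinearIsometryEquiv.norm_iteratedFDeriv_comp_left,
    norm_iteratedFDeriv_fderiv]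

lemma contDiffOn_gradient {f : E → ℝ} {U : Set E} {m n : WithTop ℕ∞} (hf : ContDiffOn ℝ n f U)
    (hU : IsOpen U) (hmn : m + 1 ≤ n) : ContDiffOn ℝ m (gradient f) U := by
  rw [gradient_eq_realRieszIsometry_comp_fderiv]
  exact (realRieszIsometry E).contDiff.comp_contDiffOn (hf.fderiv_of_isOpen hU hmn)

end Linearization

section DropletGeometry

variable {E : Type*} [NormedAddCommGroup E] [NormedSpace ℝ E]
  {T : E → E} {A : E →L[ℝ] E} {k s : ℝ} {c c' y y' e : E} {r r' : ℝ}

/-- The affine map sending the ball around `c` to its ellipsoidal droplet: the linearization at `c`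
of the transport map `T`, with derivative `A`, after expanding the image of the center by `k`
(the factor `1 + ε` of the spray). -/
def dropletMap (T : E → E) (A : E →L[ℝ] E) (k : ℝ) (c y : E) : E :=
  k • T c + A (y - c)

lemma dropletMap_eq_smul (hk : k ≠ 0) :
    dropletMap T A k c y = k • (T c + A (AffineMap.homothety c k⁻¹ y - c)) := by
  simp [dropletMap, AffineMap.homothety_apply, smul_smul, hk]

lemma norm_homothety_sub_center_le (hs : 0 ≤ s) (hy : y ∈ closedBall c r) :
    ‖AffineMap.homothety c s y - c‖ ≤ s * r := by
  rw [← dist_eq_norm, dist_homothety_center, Real.norm_of_nonneg hs, dist_comm]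
  exact mul_le_mul_of_nonneg_left (mem_closedBall.1 hy) hs

lemma homothety_mem_ball (hs : s ∈ Icc (0 : ℝ) 1) (hy : y ∈ ball c r) :
    AffineMap.homothety c s y ∈ ball c r := by
  rw [AffineMap.homothety_eq_lineMap]
  exact (convex_ball c r).lineMap_mem (mem_ball_self (pos_of_mem_ball hy)) hy hs

lemma mul_add_le_norm_homothety_sub (hs : 0 ≤ s) (hcc : r + r' ≤ dist c c')
    (hy : y ∈ closedBall c r) (hy' : y' ∈ closedBall c' r') :
    (1 - s) * (r + r') ≤ ‖AffineMap.homothety c s y - AffineMap.homothety c' s y'‖ := by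
  rw [← dist_eq_norm]
  have htri := dist_triangle4 c (AffineMap.homothety c s y) (AffineMap.homothety c' s y') c'
  rw [dist_center_homothety, dist_homothety_center, Real.norm_of_nonneg hs, dist_comm c y,
    dist_comm c' y'] at htri
  have h : s * dist y c ≤ s * r := by gcongr; exact mem_closedBall.1 hy
  have h' : s * dist y' c' ≤ s * r' := by gcongr; exact mem_closedBall.1 hy'
  linarith

/-- The contraction of `y ∈ B(c, r)` by `k⁻¹` towards `c`, moved by the margin `(1 - k⁻¹) r` that
this leaves inside `B(c, r)`, in the direction `-e`. The monotonicity of the transport map is used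
at such points. -/
noncomputable def shiftedContraction (k : ℝ) (c : E) (r : ℝ) (e y : E) : E :=
  AffineMap.homothety c k⁻¹ y - ((1 - k⁻¹) * r) • e

lemma shiftedContraction_mem_ball (hk : 1 ≤ k) (hy : y ∈ ball c r) (he : ‖e‖ ≤ 1) :
    shiftedContraction k c r e y ∈ ball c r := by
  have hr : 0 < r := pos_of_mem_ball hy
  have hk0 : 0 < k := by linarith
  have hmargin : 0 ≤ (1 - k⁻¹) * r :=
    mul_nonneg (sub_nonneg.2 (inv_le_one_of_one_le₀ hk)) hr.le
  rw [mem_ball_iff_norm]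
  calc ‖shiftedContraction k c r e y - c‖
      = ‖k⁻¹ • (y - c) - ((1 - k⁻¹) * r) • e‖ := by
        congr 1
        simp only [shiftedContraction, AffineMap.homothety_apply, vsub_eq_sub, vadd_eq_add]
        abel
    _ ≤ ‖k⁻¹ • (y - c)‖ + ‖((1 - k⁻¹) * r) • e‖ := norm_sub_le _ _
    _ = k⁻¹ * ‖y - c‖ + (1 - k⁻¹) * r * ‖e‖ := by
        rw [norm_smul, norm_smul, Real.norm_of_nonneg (inv_nonneg.2 hk0.le),
          Real.norm_of_nonneg hmargin]
    _ < k⁻¹ * r + (1 - k⁻¹) * r * 1 := by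
        refine add_lt_add_of_lt_of_le ?_ (by gcongr)
        gcongr
        exact mem_ball_iff_norm.1 hy
    _ = r := by ring

end DropletGeometry

section Droplet

variable {E : Type*} [NormedAddCommGroup E] [InnerProductSpace ℝ E]
  {T : E → E} {A : E →L[ℝ] E} {k : ℝ} {c y e : E} {r l : ℝ} {M : ℝ≥0}

lemma strongMonotoneOn_dropletMap (hA : ∀ u, l * ‖u‖ ^ 2 ≤ ⟪A u, u⟫) (s : Set E) :
    StrongMonotoneOn l (dropletMap T A k c) s := by
  intro p _ q _
  simpa [dropletMap, ← map_sub] using hA (p - q)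

lemma injOn_interpolant_dropletMap (hl : 0 < l) (hA : ∀ u, l * ‖u‖ ^ 2 ≤ ⟪A u, u⟫) (s : Set E)
    {t : ℝ} (ht : t ∈ Icc (0 : ℝ) 1) :
    InjOn (fun y => (1 - t) • y + t • dropletMap T A k c y) s := by
  refine ((strongMonotoneOn_dropletMap hA s).interpolant ht.1).injOn ?_
  rcases ht.1.eq_or_lt with rfl | ht0
  · norm_num
  · exact add_pos_of_nonneg_of_pos (sub_nonneg.2 ht.2) (mul_pos ht0 hl)

lemma mul_inner_homothety_le_inner_dropletMap (hk : 1 ≤ k)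
    (hT : ApproximatesLinearOn T A (ball c r) M) (hy : y ∈ ball c r) (he : ‖e‖ = 1) :
    k * ⟪T (AffineMap.homothety c k⁻¹ y), e⟫ ≤ ⟪dropletMap T A k c y, e⟫ + M * r := by
  have hk0 : 0 < k := by linarith
  set w := AffineMap.homothety c k⁻¹ y with hw
  have hwball : w ∈ ball c r :=
    homothety_mem_ball ⟨inv_nonneg.2 hk0.le, inv_le_one_of_one_le₀ hk⟩ hy
  have hwc : ‖w - c‖ ≤ k⁻¹ * r :=
    norm_homothety_sub_center_le (inv_nonneg.2 hk0.le) (ball_subset_closedBall hy)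
  have herror : ⟪T w - (T c + A (w - c)), e⟫ ≤ M * (k⁻¹ * r) :=
    calc ⟪T w - (T c + A (w - c)), e⟫
        ≤ ‖T w - T c - A (w - c)‖ := by
          simpa [he, sub_sub] using real_inner_le_norm (T w - (T c + A (w - c))) e
      _ ≤ M * ‖w - c‖ := hT _ hwball _ (mem_ball_self (pos_of_mem_ball hy))
      _ ≤ M * (k⁻¹ * r) := by gcongr
  rw [inner_sub_left, sub_le_iff_le_add'] at herror
  calc k * ⟪T w, e⟫ ≤ k * (⟪T c + A (w - c), e⟫ + M * (k⁻¹ * r)) := by gcongr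
    _ = ⟪dropletMap T A k c y, e⟫ + M * r := by
      rw [dropletMap_eq_smul hk0.ne', real_inner_smul_left, ← hw]
      field_simp

lemma mul_inner_shiftedContraction_add_le (hk : 1 ≤ k)
    (hmono : StrongMonotoneOn l T (ball c r)) (hlin : ApproximatesLinearOn T A (ball c r) M)
    (hy : y ∈ ball c r) (he : ‖e‖ = 1) :
    k * ⟪T (shiftedContraction k c r e y), e⟫ + ((k - 1) * l - M) * r ≤
      ⟪dropletMap T A k c y, e⟫ := by
  have hk0 : 0 < k := by linarith
  set p := shiftedContraction k c r e y
  set w := AffineMap.homothety c k⁻¹ y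
  have hpw : p + ((1 - k⁻¹) * r) • e = w := sub_add_cancel _ _
  have hgain : l * ((1 - k⁻¹) * r) ≤ ⟪T w - T p, e⟫ := by
    rw [← hpw]
    refine hmono.mul_le_inner_sub ?_ he (shiftedContraction_mem_ball hk hy he.le) ?_
    · exact mul_nonneg (sub_nonneg.2 (inv_le_one_of_one_le₀ hk)) (pos_of_mem_ball hy).le
    · exact hpw ▸ homothety_mem_ball ⟨inv_nonneg.2 hk0.le, inv_le_one_of_one_le₀ hk⟩ hy
  rw [inner_sub_left] at hgain
  have hscaled : (k - 1) * l * r ≤ k * (⟪T w, e⟫ - ⟪T p, e⟫) :=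
    calc (k - 1) * l * r = k * (l * ((1 - k⁻¹) * r)) := by field_simp
      _ ≤ k * (⟪T w, e⟫ - ⟪T p, e⟫) := mul_le_mul_of_nonneg_left hgain hk0.le
  linarith [mul_inner_homothety_le_inner_dropletMap hk hlin hy he]

end Droplet

section Separation

variable {E : Type*} [NormedAddCommGroup E] [InnerProductSpace ℝ E]
  {T : E → E} {A A' : E →L[ℝ] E} {k : ℝ} {c c' y y' : E} {r r' l l' : ℝ} {M M' : ℝ≥0}

lemma inner_add_add_smul_nonneg {u a : E} {s : ℝ} (hs0 : 0 ≤ s) (hs1 : s ≤ 1) (ha : ‖a‖ ≤ ‖u‖) :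
    0 ≤ ⟪u + a, u + s • a⟫ := by
  have hinner : -(‖u‖ * ‖a‖) ≤ ⟪u, a⟫ := neg_le_of_abs_le (abs_real_inner_le_norm u a)
  have hsa : s * ‖a‖ ≤ ‖u‖ := (mul_le_of_le_one_left (norm_nonneg a) hs1).trans ha
  calc 0 ≤ (‖u‖ - ‖a‖) * (‖u‖ - s * ‖a‖) := mul_nonneg (sub_nonneg.2 ha) (sub_nonneg.2 hsa)
    _ = ‖u‖ ^ 2 + (1 + s) * -(‖u‖ * ‖a‖) + s * ‖a‖ ^ 2 := by ring
    _ ≤ ‖u‖ ^ 2 + (1 + s) * ⟪u, a⟫ + s * ‖a‖ ^ 2 := by gcongr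
    _ = ⟪u + a, u + s • a⟫ := by
      simp only [inner_add_left, inner_add_right, real_inner_smul_right,
        real_inner_self_eq_norm_sq, real_inner_comm u a]
      ring

lemma inner_sub_homothety_sub_nonneg {s : ℝ} (hs0 : 0 ≤ s) (hs1 : s ≤ 1)
    (hcc : r + r' ≤ dist c c') (hy : y ∈ closedBall c r) (hy' : y' ∈ closedBall c' r') :
    0 ≤ ⟪y - y', AffineMap.homothety c s y - AffineMap.homothety c' s y'⟫ := by
  have hnorm : ‖(y - c) - (y' - c')‖ ≤ ‖c - c'‖ :=
    calc ‖(y - c) - (y' - c')‖ ≤ ‖y - c‖ + ‖y' - c'‖ := norm_sub_le _ _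
      _ ≤ r + r' := add_le_add (mem_closedBall_iff_norm.1 hy) (mem_closedBall_iff_norm.1 hy')
      _ ≤ ‖c - c'‖ := by rwa [← dist_eq_norm]
  convert inner_add_add_smul_nonneg hs0 hs1 hnorm using 2
  · abel
  · simp only [AffineMap.homothety_apply, vsub_eq_sub, vadd_eq_add]
    module

lemma exists_unit_inner_nonneg_shiftedContraction_eq_add_smul (hk : 1 < k)
    (hcc : r + r' ≤ dist c c') (hy : y ∈ ball c r) (hy' : y' ∈ ball c' r') :
    ∃ e : E, ‖e‖ = 1 ∧ 0 ≤ ⟪y - y', e⟫ ∧ ∃ δ : ℝ, 0 ≤ δ ∧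
      shiftedContraction k c r e y = shiftedContraction k c' r' (-e) y' + δ • e := by
  have hk0 : 0 ≤ k⁻¹ := by positivity
  have hk1 : k⁻¹ < 1 := inv_lt_one_of_one_lt₀ hk
  set v := AffineMap.homothety c k⁻¹ y - AffineMap.homothety c' k⁻¹ y' with hv
  have hgap : (1 - k⁻¹) * (r + r') ≤ ‖v‖ :=
    mul_add_le_norm_homothety_sub hk0 hcc (ball_subset_closedBall hy) (ball_subset_closedBall hy')
  have hv0 : v ≠ 0 := by
    have hmargin : 0 < (1 - k⁻¹) * (r + r') :=
      mul_pos (sub_pos.2 hk1) (add_pos (pos_of_mem_ball hy) (pos_of_mem_ball hy'))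
    exact norm_pos_iff.1 (hmargin.trans_le hgap)
  refine ⟨NormedSpace.normalize v, NormedSpace.norm_normalize hv0, ?_,
    ‖v‖ - (1 - k⁻¹) * (r + r'), sub_nonneg.2 hgap, ?_⟩
  · rw [NormedSpace.normalize, real_inner_smul_right]
    exact mul_nonneg (by positivity)
      (inner_sub_homothety_sub_nonneg hk0 hk1.le hcc
        (ball_subset_closedBall hy) (ball_subset_closedBall hy'))
  · rw [sub_smul, NormedSpace.norm_smul_normalize, hv, shiftedContraction, shiftedContraction]
    module

theorem exists_unit_le_inner_dropletMap_sub {U : Set E} (hk : 1 < k)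
    (hcc : r + r' ≤ dist c c') (hT : StrongMonotoneOn 0 T U)
    (hU : ball c r ⊆ U) (hmono : StrongMonotoneOn l T (ball c r))
    (hlin : ApproximatesLinearOn T A (ball c r) M) (hy : y ∈ ball c r)
    (hU' : ball c' r' ⊆ U) (hmono' : StrongMonotoneOn l' T (ball c' r'))
    (hlin' : ApproximatesLinearOn T A' (ball c' r') M') (hy' : y' ∈ ball c' r') :
    ∃ e : E, ‖e‖ = 1 ∧ 0 ≤ ⟪y - y', e⟫ ∧
      ((k - 1) * l - M) * r + ((k - 1) * l' - M') * r' ≤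
        ⟪dropletMap T A k c y - dropletMap T A' k c' y', e⟫ := by
  obtain ⟨e, he, hye, δ, hδ, hpq⟩ :=
    exists_unit_inner_nonneg_shiftedContraction_eq_add_smul hk hcc hy hy'
  refine ⟨e, he, hye, ?_⟩
  have he' : ‖-e‖ = 1 := by rwa [norm_neg]
  set p := shiftedContraction k c r e y
  set q := shiftedContraction k c' r' (-e) y'
  have hpU : p ∈ U := hU (shiftedContraction_mem_ball hk.le hy he.le)
  have hqU : q ∈ U := hU' (shiftedContraction_mem_ball hk.le hy' he'.le)
  have hTpq : 0 ≤ ⟪T p - T q, e⟫ := by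
    simpa [hpq] using hT.mul_le_inner_sub hδ he hqU (hpq ▸ hpU)
  have hball := mul_inner_shiftedContraction_add_le hk.le hmono hlin hy he
  have hball' := mul_inner_shiftedContraction_add_le hk.le hmono' hlin' hy' he'
  rw [inner_neg_right, inner_neg_right] at hball'
  have hkTpq : 0 ≤ k * ⟪T p - T q, e⟫ := mul_nonneg (by linarith) hTpq
  rw [inner_sub_left] at hkTpq ⊢
  linarith

lemma mul_le_dist_interpolant {t g : ℝ} (ht : t ∈ Icc (0 : ℝ) 1) {z z' e : E} (he : ‖e‖ = 1)
    (hy : 0 ≤ ⟪y - y', e⟫) (hz : g ≤ ⟪z - z', e⟫) :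
    t * g ≤ dist ((1 - t) • y + t • z) ((1 - t) • y' + t • z') :=
  calc t * g ≤ (1 - t) * ⟪y - y', e⟫ + t * ⟪z - z', e⟫ :=
        le_add_of_nonneg_of_le (mul_nonneg (sub_nonneg.2 ht.2) hy)
          (mul_le_mul_of_nonneg_left hz ht.1)
    _ = ⟪((1 - t) • y + t • z) - ((1 - t) • y' + t • z'), e⟫ := by
        simp only [inner_sub_left, inner_add_left, real_inner_smul_left]; ring
    _ ≤ dist ((1 - t) • y + t • z) ((1 - t) • y' + t • z') := by
        simpa [he, dist_eq_norm] using
          real_inner_le_norm (((1 - t) • y + t • z) - ((1 - t) • y' + t • z')) e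

end Separation

lemma injOn_iUnion_of_forall_ne {α β ι : Type*} {f : α → β} {s : ι → Set α}
    (hinj : ∀ i, InjOn f (s i)) (hne : ∀ i j, i ≠ j → ∀ x ∈ s i, ∀ y ∈ s j, f x ≠ f y) :
    InjOn f (⋃ i, s i) := by
  intro x hx y hy hxy
  obtain ⟨i, hxi⟩ := mem_iUnion.1 hx
  obtain ⟨j, hyj⟩ := mem_iUnion.1 hy
  obtain rfl : i = j := by_contra fun hij => hne i j hij x hxi y hyj hxy
  exact hinj i hxi hyj hxy

theorem injOn_and_le_dist_interpolant_spray
    {E : Type*} [NormedAddCommGroup E] [InnerProductSpace ℝ E] {T : E → E} {U : Set E}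
    {k : ℝ} (hk : 1 < k) {ι : Type*} {c : ι → E} {rad : ι → ℝ} (hrad : ∀ i, 0 < rad i)
    (hball : ∀ i, ball (c i) (rad i) ⊆ U)
    (hdisj : Pairwise fun i j => Disjoint (ball (c i) (rad i)) (ball (c j) (rad j)))
    {A : ι → E →L[ℝ] E} {lam : ι → ℝ} {M : ι → ℝ≥0} (hT : StrongMonotoneOn 0 T U)
    (hmono : ∀ i, StrongMonotoneOn (lam i) T (ball (c i) (rad i)))
    (hlin : ∀ i, ApproximatesLinearOn T (A i) (ball (c i) (rad i)) (M i))
    (hA : ∀ i, ∀ u, lam i * ‖u‖ ^ 2 ≤ ⟪A i u, u⟫) (hlam : ∀ i, 0 < lam i)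
    (hM : ∀ i, M i < (k - 1) * lam i) {S : E → E}
    (hS : ∀ i, ∀ y ∈ ball (c i) (rad i), S y = dropletMap T (A i) k (c i) y)
    {t : ℝ} (ht : t ∈ Icc (0 : ℝ) 1) :
    InjOn (fun y => (1 - t) • y + t • S y) (⋃ i, ball (c i) (rad i)) ∧
      ∀ i j, i ≠ j → ∀ y ∈ ball (c i) (rad i), ∀ y' ∈ ball (c j) (rad j),
        t * (((k - 1) * lam i - M i) * rad i + ((k - 1) * lam j - M j) * rad j) ≤
          dist ((1 - t) • y + t • S y) ((1 - t) • y' + t • S y') := by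
  have hsep : ∀ i j, i ≠ j → ∀ y ∈ ball (c i) (rad i), ∀ y' ∈ ball (c j) (rad j),
      t * (((k - 1) * lam i - M i) * rad i + ((k - 1) * lam j - M j) * rad j) ≤
        dist ((1 - t) • y + t • S y) ((1 - t) • y' + t • S y') := by
    intro i j hij y hy y' hy'
    have hcc : rad i + rad j ≤ dist (c i) (c j) :=
      (disjoint_ball_ball_iff (hrad i) (hrad j)).1 (hdisj hij)
    obtain ⟨e, he, hye, hSe⟩ := exists_unit_le_inner_dropletMap_sub hk hcc hT
      (hball i) (hmono i) (hlin i) hy (hball j) (hmono j) (hlin j) hy'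
    rw [hS i y hy, hS j y' hy']
    exact mul_le_dist_interpolant ht he hye hSe
  refine ⟨injOn_iUnion_of_forall_ne (fun i => ?_) fun i j hij y hy y' hy' heq => ?_, hsep⟩
  · refine (injOn_interpolant_dropletMap (T := T) (k := k) (c := c i) (hlam i) (hA i) _ ht).congr
      fun y hy => ?_
    rw [hS i y hy]
  · rcases ht.1.eq_or_lt with rfl | ht0
    · have hyy' : y = y' := by simpa using heq
      exact disjoint_left.1 (hdisj hij) hy (hyy' ▸ hy')
    · have hgap : ∀ n, 0 < ((k - 1) * lam n - M n) * rad n := fun n =>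
        mul_pos (sub_pos.2 (hM n)) (hrad n)
      have hdist := hsep i j hij y hy y' hy'
      rw [dist_eq_zero.2 heq] at hdist
      exact absurd hdist (not_le.2 (mul_pos ht0 (add_pos (hgap i) (hgap j))))

theorem spray_interpolants_injective_general
    {E : Type*} [NormedAddCommGroup E] [InnerProductSpace ℝ E] [CompleteSpace E]
    {U : Set E} (hU : IsOpen U) {ψ : E → ℝ} (hψ : ContDiffOn ℝ 3 ψ U) (hconv : ConvexOn ℝ U ψ)
    {ε : ℝ} (hε : 0 < ε) {ι : Type*} {c : ι → E} {rad : ι → ℝ} (hrad : ∀ i, 0 < rad i)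
    (hball : ∀ i, ball (c i) (rad i) ⊆ U)
    (hdisj : Pairwise fun i j => Disjoint (ball (c i) (rad i)) (ball (c j) (rad j)))
    {lam : ι → ℝ} (hlam : ∀ i, 0 < lam i)
    (hhess : ∀ i, ∀ y ∈ ball (c i) (rad i), ∀ u : E,
      lam i * ‖u‖ ^ 2 ≤ ⟪fderiv ℝ (gradient ψ) y u, u⟫)
    (hD3 : ∀ i, ∀ y ∈ ball (c i) (rad i),
      ‖iteratedFDeriv ℝ 3 ψ y‖ * rad i ≤ ε / 2 * lam i)
    {S : E → E} (hS : ∀ i, ∀ y ∈ ball (c i) (rad i),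
      S y = (1 + ε) • gradient ψ (c i) + fderiv ℝ (gradient ψ) (c i) (y - c i))
    {t : ℝ} (ht : t ∈ Icc (0 : ℝ) 1) :
    InjOn (fun y => (1 - t) • y + t • S y) (⋃ i, ball (c i) (rad i)) ∧
      ∀ i j, i ≠ j → ∀ y ∈ ball (c i) (rad i), ∀ y' ∈ ball (c j) (rad j),
        (ε * t / 2) * (lam i * rad i + lam j * rad j) ≤
          dist ((1 - t) • y + t • S y) ((1 - t) • y' + t • S y') := by
  have hgrad : ContDiffOn ℝ 2 (gradient ψ) U := contDiffOn_gradient hψ hU (by norm_num)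
  have hmonoU : StrongMonotoneOn 0 (gradient ψ) U := strongMonotoneOn_gradient_of_convexOn
    (fun x hx => (hψ.contDiffAt (hU.mem_nhds hx)).differentiableAt three_ne_zero) hconv
  have hmono : ∀ i, StrongMonotoneOn (lam i) (gradient ψ) (ball (c i) (rad i)) := fun i =>
    strongMonotoneOn_of_fderiv (convex_ball _ _) (fun x hx =>
      (hgrad.contDiffAt (hU.mem_nhds (hball i hx))).differentiableAt two_ne_zero) (hhess i)
  have hpos : ∀ i, 0 < ε / 2 * lam i := fun i => mul_pos (half_pos hε) (hlam i)
  have hM : ∀ i, ((ε / 2 * lam i).toNNReal : ℝ) = ε / 2 * lam i := fun i =>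
    Real.coe_toNNReal _ (hpos i).le
  have hlin : ∀ i, ApproximatesLinearOn (gradient ψ) (fderiv ℝ (gradient ψ) (c i))
      (ball (c i) (rad i)) (ε / 2 * lam i).toNNReal := fun i =>
    approximatesLinearOn_ball_of_norm_fderiv_fderiv_mul_le (hgrad.mono (hball i)) fun y hy => by
      rw [norm_fderiv_fderiv_gradient, hM]
      exact hD3 i y hy
  obtain ⟨hinj, hsep⟩ := injOn_and_le_dist_interpolant_spray (lt_add_of_pos_right 1 hε) hrad
    hball hdisj hmonoU hmono hlin (fun i => hhess i _ (mem_ball_self (hrad i))) hlam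
    (fun i => by linarith [hM i, hpos i]) hS ht
  refine ⟨hinj, fun i j hij y hy y' hy' => le_of_eq_of_le ?_ (hsep i j hij y hy y' hy')⟩
  rw [hM, hM]
  ring

/-- Injectivity of the displacement interpolants of the piecewise-affine
ellipsoidal transport spray: on a disjoint family of balls `B(xᵢ,rᵢ) ⊆ U`, with uniform
ellipticity `⟪Hess ψ(x)u,u⟫ ≥ λ̲ᵢ‖u‖²` and the smallness condition `‖D³ψ‖·rᵢ < (ε/4)λ̲ᵢ²`,
the maps `S_t = (1−t)id + tS`, where `S(x) = (1+ε)∇ψ(xᵢ) + Hess ψ(xᵢ)(x−xᵢ)` on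
`B(xᵢ,rᵢ)`, are injective on `⋃ᵢ B(xᵢ,rᵢ)`, with quantitative separation of the images of
distinct balls. -/
theorem spray_interpolants_injective
    (d : ℕ) (U : Set (EuclideanSpace ℝ (Fin d))) (hUopen : IsOpen U) (hUconv : Convex ℝ U)
    (ψ : EuclideanSpace ℝ (Fin d) → ℝ)
    (hψ : ContDiffOn ℝ 3 ψ U) (hψconv : ConvexOn ℝ U ψ)
    (ε : ℝ) (hε : ε ∈ Ioo (0:ℝ) 1)
    (ι : Type*) [Countable ι]
    (c : ι → EuclideanSpace ℝ (Fin d)) (rad : ι → ℝ) (hrad : ∀ i, 0 < rad i)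
    (hball : ∀ i, ball (c i) (rad i) ⊆ U)
    (hdisj : Pairwise fun i j => Disjoint (ball (c i) (rad i)) (ball (c j) (rad j)))
    (lam : ι → ℝ) (hlam : ∀ i, lam i ∈ Ioc (0:ℝ) 1)
    (hhess : ∀ i, ∀ y ∈ ball (c i) (rad i), ∀ u : EuclideanSpace ℝ (Fin d),
      lam i * ‖u‖ ^ 2 ≤ ⟪fderiv ℝ (gradient ψ) y u, u⟫)
    (hD3 : ∀ i, ∀ y ∈ ball (c i) (rad i),
      ‖iteratedFDeriv ℝ 3 ψ y‖ * rad i < (ε / 4) * (lam i) ^ 2)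
    (S : EuclideanSpace ℝ (Fin d) → EuclideanSpace ℝ (Fin d))
    (hS : ∀ i, ∀ y ∈ ball (c i) (rad i),
      S y = (1 + ε) • gradient ψ (c i) + fderiv ℝ (gradient ψ) (c i) (y - c i)) :
    ∀ t ∈ Icc (0:ℝ) 1,
      Set.InjOn (fun y => (1 - t) • y + t • S y) (⋃ i, ball (c i) (rad i)) ∧
      ∀ i j, i ≠ j → ∀ y ∈ ball (c i) (rad i), ∀ y' ∈ ball (c j) (rad j),
        (ε * t / 2) * ((lam i) ^ 2 * rad i + (lam j) ^ 2 * rad j) ≤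
          dist ((1 - t) • y + t • S y) ((1 - t) • y' + t • S y') := by
  intro t ht
  have hsq : ∀ i, lam i ^ 2 ≤ lam i := fun i =>
    pow_le_of_le_one (hlam i).1.le (hlam i).2 two_ne_zero
  have hD3' : ∀ i, ∀ y ∈ ball (c i) (rad i), ‖iteratedFDeriv ℝ 3 ψ y‖ * rad i ≤ ε / 2 * lam i :=
    fun i y hy => (hD3 i y hy).le.trans
      (mul_le_mul (by linarith [hε.1]) (hsq i) (sq_nonneg _) (half_pos hε.1).le)
  refine (spray_interpolants_injective_general hUopen hψ hψconv hε.1 hrad hball hdisj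
    (fun i => (hlam i).1) hhess hD3' hS ht).imp_right
      fun hsep i j hij y hy y' hy' => le_trans ?_ (hsep i j hij y hy y' hy')
  have hεt : 0 ≤ ε * t / 2 := by have := hε.1; have := ht.1; positivity
  gcongr
  exacts [(hrad i).le, hsq i, (hrad j).le, hsq j]
end

section
/- Let p ∈ (1,∞). Let μ_k (k ∈ ℕ) and μ be Borel probability measures on ℝ^d that are absolutely continuous with respect to Lebesgue measure, and let ν_k and ν be Borel probability measures on ℝ^d, all with finite p-th moments. Suppose d_p(μ_k, μ) → 0 and d_p(ν_k, ν) → 0 as k → ∞. Let T_k, T : ℝ^d → ℝ^d be Borel maps with (T_k)_# μ_k = ν_k and T_# μ = ν, such that the couplings (id × T_k)_# μ_k and (id × T)_# μ are optimal, i.e. achieve d_p(μ_k, ν_k)^p and d_p(μ, ν)^p respectively. Then (μ_k, T_k) converges to (μ, T) in the TL^p sense: inf over couplings θ of μ and μ_k of ∫ (|x − y|^p + |T(x) − T_k(y)|^p) dθ(x,y) → 0 as k → ∞. -/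
open Set MeasureTheory Filter
open scoped ENNReal Topology

/-- The `p`-th power `L^p`-Wasserstein cost between two measures on `ℝ^d`: the infimum
over couplings of the integral of `|x − y|^p`. -/
noncomputable def WpCost {d : ℕ} (p : ℝ)
    (μ ν : Measure (EuclideanSpace ℝ (Fin d))) : ℝ≥0∞ :=
  sInf { C | ∃ π : Measure (EuclideanSpace ℝ (Fin d) × EuclideanSpace ℝ (Fin d)),
    π.map Prod.fst = μ ∧ π.map Prod.snd = ν ∧
    C = ∫⁻ q, ENNReal.ofReal (‖q.1 - q.2‖ ^ p) ∂π }

/-!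
Exchanging the targets of two independently chosen transported points, one from a coupling `σ` of
`μ` and `ν` and one from the graph of the optimal map `T`, whenever this lowers the cost, again
produces couplings of `μ` and `ν`. Hence the expected gain of the exchange is at most the excess of
the cost of `σ` over the optimal cost. If `y ≠ T x`, then exchanging targets between `(x, y)` and
`(x', T x')` is profitable for a set of `x'` of positive measure, for almost every `x`: since the
gradient of `‖·‖ ^ p` is strictly monotone, it pays off when `x'` is a small step away from `x` in
the direction `y - T x` and `T x'` is close to `T x`, and such `x'` exist by Lebesgue's density
theorem. So couplings whose cost tends to the optimal cost concentrate on the graph of `T`, and the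
`p`-th moment of `ν` upgrades this to convergence in `L^p`.

Near-optimal couplings `θ` of `μ` and `μ_k` and `η` of `ν_k` and `ν`, glued along `T_k`, give such
couplings of `μ` and `ν`, because `T_k` is optimal and hence costs asymptotically no more than `T`.
Their closeness to the graph of `T` says that `T x` is close to `T_k x'` in `L^p(θ)`.
-/

section Coupling

open ProbabilityTheory

variable {X Y Ω : Type*} [MeasurableSpace X] [MeasurableSpace Y] [MeasurableSpace Ω]

lemma isProbabilityMeasure_of_measurePreserving {μ : Measure X} {ν : Measure Y} {f : X → Y}
    [IsProbabilityMeasure μ] (hf : MeasurePreserving f μ ν) : IsProbabilityMeasure ν :=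
  hf.map_eq ▸ Measure.isProbabilityMeasure_map hf.aemeasurable

/-- `IsCoupling π μ ν` says that the marginals of the measure `π` on `X × Y` are `μ` and `ν`. -/
structure IsCoupling (π : Measure (X × Y)) (μ : Measure X) (ν : Measure Y) : Prop where
  fst : MeasurePreserving Prod.fst π μ
  snd : MeasurePreserving Prod.snd π ν

lemma isCoupling_map_prodMk {P : Measure Ω} {μ : Measure X} {ν : Measure Y} {f : Ω → X}
    {g : Ω → Y} (hf : MeasurePreserving f P μ) (hg : MeasurePreserving g P ν) :
    IsCoupling (P.map fun ω => (f ω, g ω)) μ ν where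
  fst := ⟨measurable_fst, by
    rw [Measure.map_map measurable_fst (hf.measurable.prodMk hg.measurable)]; exact hf.map_eq⟩
  snd := ⟨measurable_snd, by
    rw [Measure.map_map measurable_snd (hf.measurable.prodMk hg.measurable)]; exact hg.map_eq⟩

lemma isCoupling_prod (μ : Measure X) (ν : Measure Y) [IsProbabilityMeasure μ]
    [IsProbabilityMeasure ν] : IsCoupling (μ.prod ν) μ ν :=
  ⟨measurePreserving_fst, measurePreserving_snd⟩

namespace IsCoupling

variable {π π' : Measure (X × Y)} {μ μ' : Measure X} {ν ν' : Measure Y}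

lemma swap (hπ : IsCoupling π μ ν) : IsCoupling (π.map Prod.swap) ν μ :=
  isCoupling_map_prodMk hπ.snd hπ.fst

lemma add (hπ : IsCoupling π μ ν) (hπ' : IsCoupling π' μ' ν') :
    IsCoupling (π + π') (μ + μ') (ν + ν') :=
  ⟨hπ.fst.add_measure hπ'.fst, hπ.snd.add_measure hπ'.snd⟩

lemma isProbabilityMeasure (hπ : IsCoupling π μ ν) [IsProbabilityMeasure μ] :
    IsProbabilityMeasure π := by
  have : IsProbabilityMeasure (π.map Prod.fst) := hπ.fst.map_eq ▸ inferInstance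
  exact Measure.isProbabilityMeasure_of_map Prod.fst

end IsCoupling

lemma exists_measurePreserving_fst_and_comp [StandardBorelSpace Y] [Nonempty Y] {P : Measure Ω}
    [SFinite P] {η : Measure (X × Y)} [IsFiniteMeasure η] {μ : Measure X} {f : Ω → X}
    (hf : MeasurePreserving f P μ) (hη : MeasurePreserving Prod.fst η μ) :
    ∃ Q : Measure (Ω × Y), MeasurePreserving Prod.fst Q P ∧
      MeasurePreserving (fun z => (f z.1, z.2)) Q η := by
  have hm : Measurable fun z : Ω × Y => (f z.1, z.2) :=
    (hf.measurable.comp measurable_fst).prodMk measurable_snd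
  refine ⟨P ⊗ₘ η.condKernel.comap f hf.measurable, ⟨measurable_fst, Measure.fst_compProd _ _⟩,
    hm, ?_⟩
  have hfst : P.map f = η.fst := hf.map_eq.trans hη.map_eq.symm
  conv_rhs => rw [← η.disintegrate η.condKernel, ← hfst]
  ext s hs
  rw [Measure.map_apply hm hs, Measure.compProd_apply (hm hs), Measure.compProd_apply hs,
    lintegral_map (Kernel.measurable_kernel_prodMk_left hs) hf.measurable]
  rfl

end Coupling

section TransportCost

variable {X Y : Type*} [MeasurableSpace X] [MeasurableSpace Y]
  {c : X × Y → ℝ≥0∞} {μ : Measure X} {ν : Measure Y}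

/-- The optimal transport cost of Kantorovich: the infimum of `∫⁻ c` over all couplings of `μ`
and `ν`. -/
noncomputable def transportCost (c : X × Y → ℝ≥0∞) (μ : Measure X) (ν : Measure Y) : ℝ≥0∞ :=
  ⨅ (π : Measure (X × Y)) (_ : IsCoupling π μ ν), ∫⁻ q, c q ∂π

/-- `T` transports `μ` to `ν`, and the coupling concentrated on its graph attains the optimal
transport cost. -/
structure IsOptimalMap (c : X × Y → ℝ≥0∞) (T : X → Y) (μ : Measure X) (ν : Measure Y) : Prop where
  measurePreserving : MeasurePreserving T μ ν
  lintegral_eq : ∫⁻ x, c (x, T x) ∂μ = transportCost c μ ν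

lemma transportCost_le_lintegral {π : Measure (X × Y)} (hπ : IsCoupling π μ ν) :
    transportCost c μ ν ≤ ∫⁻ q, c q ∂π :=
  iInf₂_le π hπ

lemma sInf_lintegral_eq_transportCost (c : X × Y → ℝ≥0∞) (μ : Measure X) (ν : Measure Y) :
    sInf {C | ∃ π : Measure (X × Y), π.map Prod.fst = μ ∧ π.map Prod.snd = ν ∧
      C = ∫⁻ q, c q ∂π} = transportCost c μ ν := by
  refine le_antisymm
    (le_iInf₂ fun π hπ => sInf_le ⟨π, hπ.fst.map_eq, hπ.snd.map_eq, rfl⟩) (le_sInf ?_)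
  rintro _ ⟨π, hμ, hν, rfl⟩
  exact transportCost_le_lintegral ⟨⟨measurable_fst, hμ⟩, ⟨measurable_snd, hν⟩⟩

lemma inv_two_smul_add_self (μ : Measure X) : (2⁻¹ : ℝ≥0∞) • (μ + μ) = μ := by
  rw [← two_smul ℝ≥0∞, smul_smul, ENNReal.inv_mul_cancel two_ne_zero ENNReal.ofNat_ne_top,
    one_smul]

lemma two_mul_transportCost_le_lintegral {τ : Measure (X × Y)}
    (hτ : IsCoupling τ (μ + μ) (ν + ν)) : 2 * transportCost c μ ν ≤ ∫⁻ q, c q ∂τ := by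
  have half_coupling : IsCoupling ((2⁻¹ : ℝ≥0∞) • τ) μ ν := by
    constructor
    · simpa only [inv_two_smul_add_self] using hτ.fst.smul_measure (2⁻¹ : ℝ≥0∞)
    · simpa only [inv_two_smul_add_self] using hτ.snd.smul_measure (2⁻¹ : ℝ≥0∞)
  calc 2 * transportCost c μ ν ≤ 2 * (2⁻¹ * ∫⁻ q, c q ∂τ) := by
        gcongr
        simpa only [lintegral_smul_measure, smul_eq_mul] using
          transportCost_le_lintegral (c := c) half_coupling
    _ = ∫⁻ q, c q ∂τ := ENNReal.mul_inv_cancel_left two_ne_zero ENNReal.ofNat_ne_top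

lemma exists_isCoupling_lintegral_le_add [IsProbabilityMeasure μ] [IsProbabilityMeasure ν]
    (c : X × Y → ℝ≥0∞) {ε : ℝ≥0∞} (hε : ε ≠ 0) :
    ∃ π, IsCoupling π μ ν ∧ ∫⁻ q, c q ∂π ≤ transportCost c μ ν + ε := by
  by_cases hc : transportCost c μ ν = ⊤
  · exact ⟨μ.prod ν, isCoupling_prod μ ν, by simp only [hc, top_add, le_top]⟩
  · obtain ⟨π, hπ⟩ := iInf_lt_iff.mp (ENNReal.lt_add_right hc hε)
    obtain ⟨hcoupling, hlt⟩ := iInf_lt_iff.mp hπ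
    exact ⟨π, hcoupling, hlt.le⟩

-- The second index absorbs the error of the near-optimal couplings, so `l` may be any filter.
lemma exists_isCoupling_tendsto_lintegral {ι : Type*} {l : Filter ι} {m : ι → Measure X}
    {n : ι → Measure Y} [∀ i, IsProbabilityMeasure (m i)] [∀ i, IsProbabilityMeasure (n i)]
    (h : Tendsto (fun i => transportCost c (m i) (n i)) l (𝓝 0)) :
    ∃ π : ι × ℕ → Measure (X × Y), (∀ j, IsCoupling (π j) (m j.1) (n j.1)) ∧
      Tendsto (fun j => ∫⁻ q, c q ∂π j) (l ×ˢ atTop) (𝓝 0) := by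
  choose π hπ hle using fun j : ι × ℕ =>
    exists_isCoupling_lintegral_le_add (μ := m j.1) (ν := n j.1) c (ε := (j.2 : ℝ≥0∞)⁻¹)
      (ENNReal.inv_ne_zero.mpr (ENNReal.natCast_ne_top _))
  refine ⟨π, hπ, tendsto_nhds_bot_mono ?_ (.of_forall hle)⟩
  simpa only [add_zero, bot_eq_zero, Function.comp_def] using
    (h.comp tendsto_fst).add (ENNReal.tendsto_inv_nat_nhds_zero.comp tendsto_snd)

end TransportCost

section Exchange

variable {X Y Ω : Type*} [MeasurableSpace X] [MeasurableSpace Y] [MeasurableSpace Ω]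

lemma map_piecewise_add_map_piecewise {P : Measure Ω} {A : Set Ω} [∀ ω, Decidable (ω ∈ A)]
    (hA : MeasurableSet A) {f g : Ω → Y} (hf : Measurable f) (hg : Measurable g) :
    P.map (A.piecewise f g) + P.map (A.piecewise g f) = P.map f + P.map g := by
  refine Measure.ext_of_lintegral _ fun φ hφ => ?_
  have hfg : Measurable (A.piecewise f g) := hf.piecewise hA hg
  have hgf : Measurable (A.piecewise g f) := hg.piecewise hA hf
  rw [lintegral_add_measure, lintegral_add_measure, lintegral_map hφ hfg, lintegral_map hφ hgf,
    lintegral_map hφ hf, lintegral_map hφ hg, ← lintegral_add_left (by fun_prop),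
    ← lintegral_add_left (by fun_prop)]
  refine lintegral_congr fun ω => ?_
  by_cases hω : ω ∈ A
  · simp only [piecewise_eq_of_mem _ _ _ hω]
  · simp only [piecewise_eq_of_notMem _ _ _ hω, add_comm]

/-- The decrease of the total cost of transporting along `q` and `q'` when the two targets are
exchanged, or `0` if the exchange does not pay off. -/
noncomputable def swapGain (c : X × Y → ℝ≥0∞) (q q' : X × Y) : ℝ≥0∞ :=
  c q + c q' - (c (q.1, q'.2) + c (q'.1, q.2))

lemma measurable_swapGain {c : X × Y → ℝ≥0∞} (hc : Measurable c) {f g : Ω → X × Y}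
    (hf : Measurable f) (hg : Measurable g) : Measurable fun ω => swapGain c (f ω) (g ω) := by
  unfold swapGain
  fun_prop

lemma exists_isCoupling_add_lintegral_swapGain_add_eq {c : X × Y → ℝ≥0∞} (hc : Measurable c)
    {μ : Measure X} {ν : Measure Y} {σ γ : Measure (X × Y)} [IsProbabilityMeasure σ]
    [IsProbabilityMeasure γ] (hσ : IsCoupling σ μ ν) (hγ : IsCoupling γ μ ν) :
    ∃ τ, IsCoupling τ (μ + μ) (ν + ν) ∧
      ∫⁻ z, swapGain c z.1 z.2 ∂σ.prod γ + ∫⁻ q, c q ∂τ = ∫⁻ q, c q ∂σ + ∫⁻ q, c q ∂γ := by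
  classical
  set P := σ.prod γ
  have left_law : MeasurePreserving Prod.fst P σ := measurePreserving_fst
  have right_law : MeasurePreserving Prod.snd P γ := measurePreserving_snd
  let A : Set ((X × Y) × (X × Y)) :=
    {z | c (z.1.1, z.2.2) + c (z.2.1, z.1.2) < c z.1 + c z.2}
  have hA : MeasurableSet A := measurableSet_lt (by fun_prop) (by fun_prop)
  let y : (X × Y) × (X × Y) → Y := A.piecewise (fun z => z.2.2) (fun z => z.1.2)
  let y' : (X × Y) × (X × Y) → Y := A.piecewise (fun z => z.1.2) (fun z => z.2.2)
  have hy : Measurable y := Measurable.piecewise hA (by fun_prop) (by fun_prop)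
  have hy' : Measurable y' := Measurable.piecewise hA (by fun_prop) (by fun_prop)
  have targets : P.map y + P.map y' = ν + ν := by
    rw [map_piecewise_add_map_piecewise hA (by fun_prop) (by fun_prop)]
    exact congrArg₂ _ (hγ.snd.comp right_law).map_eq (hσ.snd.comp left_law).map_eq
  have exchanged : IsCoupling
      (P.map (fun z => (z.1.1, y z)) + P.map fun z => (z.2.1, y' z)) (μ + μ) (ν + ν) :=
    targets ▸ (isCoupling_map_prodMk (hσ.fst.comp left_law) (hy.measurePreserving P)).add
      (isCoupling_map_prodMk (hγ.fst.comp right_law) (hy'.measurePreserving P))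
  have gain_add_cost (z) :
      swapGain c z.1 z.2 + (c (z.1.1, y z) + c (z.2.1, y' z)) = c z.1 + c z.2 := by
    by_cases hz : z ∈ A
    · simp only [y, y', piecewise_eq_of_mem _ _ _ hz]
      exact tsub_add_cancel_of_le (le_of_lt hz)
    · have no_gain : swapGain c z.1 z.2 = 0 := tsub_eq_zero_of_le (not_lt.mp fun h => hz h)
      simp only [y, y', piecewise_eq_of_notMem _ _ _ hz, no_gain, zero_add]
  refine ⟨_, exchanged, ?_⟩
  rw [lintegral_add_measure, lintegral_map hc (by fun_prop), lintegral_map hc (by fun_prop),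
    ← lintegral_add_left (by fun_prop),
    ← lintegral_add_left (measurable_swapGain hc measurable_fst measurable_snd),
    lintegral_congr gain_add_cost, lintegral_add_left (by fun_prop), left_law.lintegral_comp hc,
    right_law.lintegral_comp hc]

lemma lintegral_swapGain_add_two_mul_transportCost_le {c : X × Y → ℝ≥0∞} (hc : Measurable c)
    {μ : Measure X} {ν : Measure Y} {σ γ : Measure (X × Y)} [IsProbabilityMeasure σ]
    [IsProbabilityMeasure γ] (hσ : IsCoupling σ μ ν) (hγ : IsCoupling γ μ ν) :
    ∫⁻ z, swapGain c z.1 z.2 ∂σ.prod γ + 2 * transportCost c μ ν ≤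
      ∫⁻ q, c q ∂σ + ∫⁻ q, c q ∂γ := by
  obtain ⟨τ, hτ, hτ_eq⟩ := exists_isCoupling_add_lintegral_swapGain_add_eq hc hσ hγ
  exact (add_le_add_right (two_mul_transportCost_le_lintegral hτ) _).trans_eq hτ_eq

lemma lintegral_swapGain_graph_le {c : X × Y → ℝ≥0∞} (hc : Measurable c) {μ : Measure X}
    {ν : Measure Y} [IsProbabilityMeasure μ] {σ : Measure (X × Y)} (hσ : IsCoupling σ μ ν)
    {T : X → Y} (hT : IsOptimalMap c T μ ν) (hfin : transportCost c μ ν ≠ ⊤) :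
    ∫⁻ q, ∫⁻ x, swapGain c q (x, T x) ∂μ ∂σ ≤ ∫⁻ q, c q ∂σ - transportCost c μ ν := by
  have : IsProbabilityMeasure σ := hσ.isProbabilityMeasure
  have hgraph : Measurable fun x => (x, T x) := measurable_id.prodMk hT.measurePreserving.measurable
  have hγ : IsCoupling (μ.map fun x => (x, T x)) μ ν :=
    isCoupling_map_prodMk (.id μ) hT.measurePreserving
  have : IsProbabilityMeasure (μ.map fun x => (x, T x)) := hγ.isProbabilityMeasure
  have gain_eq : ∫⁻ z, swapGain c z.1 z.2 ∂σ.prod (μ.map fun x => (x, T x)) =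
      ∫⁻ q, ∫⁻ x, swapGain c q (x, T x) ∂μ ∂σ := by
    rw [lintegral_prod _ (measurable_swapGain hc measurable_fst measurable_snd).aemeasurable]
    exact lintegral_congr fun q =>
      lintegral_map (measurable_swapGain hc measurable_const measurable_id) hgraph
  have key := lintegral_swapGain_add_two_mul_transportCost_le hc hσ hγ
  rw [gain_eq, lintegral_map hc hgraph, hT.lintegral_eq, two_mul, ← add_assoc] at key
  exact ENNReal.le_sub_of_add_le_right hfin ((ENNReal.add_le_add_iff_right hfin).mp key)

/-- The average over `x'` of the gain of exchanging targets between `q` and `(x', T x')`. The gain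
is truncated at `1` so that continuity in `q.2` follows by dominated convergence. -/
noncomputable def meanSwapGain (c : X × Y → ℝ≥0∞) (μ : Measure X) (T : X → Y) (q : X × Y) :
    ℝ≥0∞ :=
  ∫⁻ x, min 1 (swapGain c q (x, T x)) ∂μ

section MeanSwapGain

variable {c : X × Y → ℝ≥0∞} {μ : Measure X} {T : X → Y}

lemma measurable_meanSwapGain (hc : Measurable c) [SFinite μ] (hT : Measurable T) :
    Measurable (meanSwapGain c μ T) :=
  Measurable.lintegral_prod_right <|
    measurable_const.min (measurable_swapGain hc measurable_fst
      (measurable_snd.prodMk (hT.comp measurable_snd)))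

lemma continuous_meanSwapGain_prodMk_left [IsFiniteMeasure μ] [TopologicalSpace Y]
    [FirstCountableTopology Y] (hc : Measurable c) (hfin : ∀ q, c q ≠ ⊤)
    (hcont : ∀ x, Continuous fun y => c (x, y)) (hT : Measurable T) (x : X) :
    Continuous fun y => meanSwapGain c μ T (x, y) := by
  refine continuous_iff_continuousAt.mpr fun y => ?_
  refine tendsto_lintegral_filter_of_dominated_convergence (fun _ => 1)
    (.of_forall fun y => ?_) (.of_forall fun y => .of_forall fun x' => min_le_left _ _) ?_
    (.of_forall fun x' => ?_)
  · exact measurable_const.min (measurable_swapGain hc measurable_const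
      (measurable_id.prodMk hT))
  · simpa only [lintegral_one] using measure_ne_top μ univ
  · exact tendsto_const_nhds.min (ENNReal.Tendsto.sub
      (((hcont x).tendsto y).add tendsto_const_nhds)
      (tendsto_const_nhds.add ((hcont x').tendsto y))
      (.inl (ENNReal.add_ne_top.mpr ⟨hfin _, hfin _⟩)))

lemma meanSwapGain_pos (hc : Measurable c) (hT : Measurable T) {q : X × Y}
    (h : 0 < μ {x | c (q.1, T x) + c (x, q.2) < c q + c (x, T x)}) :
    0 < meanSwapGain c μ T q := by
  have hmeas : Measurable fun x => min 1 (swapGain c q (x, T x)) :=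
    measurable_const.min (measurable_swapGain hc measurable_const (measurable_id.prodMk hT))
  refine (lintegral_pos_iff_support hmeas).mpr (h.trans_le (measure_mono fun x hx => ?_))
  exact (lt_min one_pos (tsub_pos_of_lt hx)).ne'

lemma lintegral_meanSwapGain_le (hc : Measurable c) [IsProbabilityMeasure μ] {ν : Measure Y}
    {σ : Measure (X × Y)} (hσ : IsCoupling σ μ ν) (hT : IsOptimalMap c T μ ν)
    (hfin : transportCost c μ ν ≠ ⊤) :
    ∫⁻ q, meanSwapGain c μ T q ∂σ ≤ ∫⁻ q, c q ∂σ - transportCost c μ ν :=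
  (lintegral_mono fun _ => lintegral_mono fun _ => min_le_right _ _).trans
    (lintegral_swapGain_graph_le hc hσ hT hfin)

end MeanSwapGain

end Exchange

section Concentration

lemma exists_inv_nat_le_of_lt_edist {Y : Type*} [PseudoEMetricSpace Y] {F : Y → ℝ≥0∞}
    (hF : Continuous F) {y₀ : Y} (hpos : ∀ y, y ≠ y₀ → 0 < F y) {K : Set Y} (hK : IsCompact K)
    {r : ℝ≥0∞} (hr : 0 < r) :
    ∃ n : ℕ, ∀ y ∈ K, r < edist y₀ y → (n : ℝ≥0∞)⁻¹ ≤ F y := by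
  have hcompact : IsCompact (K ∩ {y | r ≤ edist y₀ y}) :=
    hK.inter_right (isClosed_le continuous_const (by fun_prop))
  rcases (K ∩ {y | r ≤ edist y₀ y}).eq_empty_or_nonempty with hempty | hne
  · exact ⟨0, fun y hy hry => (hempty.subset ⟨hy, hry.le⟩).elim⟩
  · obtain ⟨y, ⟨-, hry⟩, hmin⟩ := hcompact.exists_isMinOn hne hF.continuousOn
    have hy : y ≠ y₀ := by
      rintro rfl
      exact (hr.trans_le hry).ne' (edist_self y)
    obtain ⟨n, hn⟩ := ENNReal.exists_inv_nat_lt (hpos y hy).ne'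
    exact ⟨n, fun y' hy' hry' => hn.le.trans (hmin ⟨hy', hry'.le⟩)⟩

variable {X Y : Type*} [MeasurableSpace X] [PseudoEMetricSpace Y] [MeasurableSpace Y]
  [BorelSpace Y] [SecondCountableTopology Y] {F : X × Y → ℝ≥0∞} {T : X → Y}

lemma exists_measure_le_forall_le_of_lt_edist {μ : Measure X} [IsFiniteMeasure μ]
    (hF : Measurable F) (hFcont : ∀ x, Continuous fun y => F (x, y)) (hT : Measurable T)
    (hpos : ∀ᵐ x ∂μ, ∀ y, y ≠ T x → 0 < F (x, y)) {K : Set Y} (hK : IsCompact K) {r : ℝ≥0∞}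
    (hr : 0 < r) {δ : ℝ≥0∞} (hδ : 0 < δ) :
    ∃ B, μ B ≤ δ ∧ ∃ c : ℝ≥0∞, c ≠ 0 ∧ c ≠ ⊤ ∧
      ∀ x ∉ B, ∀ y ∈ K, r < edist (T x) y → c ≤ F (x, y) := by
  obtain ⟨D, hDcount, hDdense⟩ := TopologicalSpace.exists_countable_dense K
  -- A countable union over `D` is measurable, unlike the corresponding union over `K`.
  let B (n : ℕ) : Set X := ⋃ y ∈ D, {x | r < edist (T x) y ∧ F (x, y) < (n : ℝ≥0∞)⁻¹}
  have hBmeas (n) : MeasurableSet (B n) := .biUnion hDcount fun y _ =>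
    (measurableSet_lt measurable_const (hT.edist measurable_const)).inter
      (measurableSet_lt (hF.comp measurable_prodMk_right) measurable_const)
  have hBanti : Antitone B := fun m n hmn => iUnion₂_mono fun y _ x hx =>
    ⟨hx.1, hx.2.trans_le (ENNReal.inv_le_inv.mpr (Nat.cast_le.mpr hmn))⟩
  have hBnull : μ (⋂ n, B n) = 0 := by
    refine measure_mono_null ?_ (ae_iff.mp hpos)
    intro x hx hxpos
    obtain ⟨n, hn⟩ := exists_inv_nat_le_of_lt_edist (hFcont x) hxpos hK hr
    obtain ⟨y, -, hry, hlt⟩ := mem_iUnion₂.mp (mem_iInter.mp hx n)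
    exact (hn y y.2 hry).not_gt hlt
  have hBtendsto : Tendsto (fun n => μ (B n)) atTop (𝓝 0) :=
    hBnull ▸ tendsto_measure_iInter_atTop (fun n => (hBmeas n).nullMeasurableSet) hBanti
      ⟨0, measure_ne_top μ _⟩
  obtain ⟨n, hBn, hn⟩ := ((hBtendsto.eventually_le_const hδ).and (eventually_ne_atTop 0)).exists
  refine ⟨B n, hBn, (n : ℝ≥0∞)⁻¹, ENNReal.inv_ne_zero.mpr (ENNReal.natCast_ne_top n),
    ENNReal.inv_ne_top.mpr (Nat.cast_ne_zero.mpr hn), fun x hx y hy hry => ?_⟩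
  by_contra! hlt
  have hopen : IsOpen {y : K | r < edist (T x) y ∧ F (x, y) < (n : ℝ≥0∞)⁻¹} :=
    (isOpen_lt continuous_const (continuous_const.edist continuous_subtype_val)).inter
      (isOpen_lt ((hFcont x).comp continuous_subtype_val) continuous_const)
  obtain ⟨y', hy'D, hy'⟩ := hDdense.exists_mem_open hopen ⟨⟨y, hy⟩, hry, hlt⟩
  exact hx (mem_iUnion₂.mpr ⟨y', hy'D, hy'⟩)

lemma tendsto_measure_lt_edist_graph [CompleteSpace Y] {μ : Measure X} [IsFiniteMeasure μ]
    {ν : Measure Y} [IsFiniteMeasure ν] (hF : Measurable F)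
    (hFcont : ∀ x, Continuous fun y => F (x, y)) (hT : Measurable T)
    (hpos : ∀ᵐ x ∂μ, ∀ y, y ≠ T x → 0 < F (x, y)) {ι : Type*} {l : Filter ι}
    {σ : ι → Measure (X × Y)} (hσ : ∀ i, IsCoupling (σ i) μ ν)
    (hlim : Tendsto (fun i => ∫⁻ q, F q ∂σ i) l (𝓝 0)) {r : ℝ≥0∞} (hr : 0 < r) :
    Tendsto (fun i => σ i {q | r < edist (T q.1) q.2}) l (𝓝 0) := by
  refine ENNReal.tendsto_nhds_zero.mpr fun ε hε => ?_
  have hε3 : 0 < ε / 3 := ENNReal.div_pos hε.ne' ENNReal.ofNat_ne_top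
  obtain ⟨K, hK, hνK⟩ :=
    isTightMeasureSet_iff_exists_isCompact_measure_compl_le.mp
      (isTightMeasureSet_singleton (μ := ν)) (ε / 3) hε3
  obtain ⟨B, hμB, c, hc0, hctop, hcF⟩ :=
    exists_measure_le_forall_le_of_lt_edist hF hFcont hT hpos hK hr hε3
  have hsub : {q | r < edist (T q.1) q.2} ⊆
      Prod.fst ⁻¹' B ∪ Prod.snd ⁻¹' Kᶜ ∪ {q | c ≤ F q} := fun q hq => by
    by_cases hqB : q.1 ∈ B
    · exact .inl (.inl hqB)
    by_cases hqK : q.2 ∈ K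
    · exact .inr (hcF q.1 hqB q.2 hqK hq)
    · exact .inl (.inr hqK)
  have markov : Tendsto (fun i => (∫⁻ q, F q ∂σ i) / c) l (𝓝 0) := by
    simpa only [ENNReal.zero_div] using ENNReal.Tendsto.div_const hlim (.inr hc0)
  filter_upwards [markov.eventually_le_const hε3] with i hi
  calc σ i {q | r < edist (T q.1) q.2}
      ≤ σ i (Prod.fst ⁻¹' B) + σ i (Prod.snd ⁻¹' Kᶜ) + σ i {q | c ≤ F q} :=
        (measure_mono hsub).trans ((measure_union_le _ _).trans
          (add_le_add_left (measure_union_le _ _) _))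
    _ ≤ ε / 3 + ε / 3 + ε / 3 := by
        gcongr
        · exact ((hσ i).fst.measure_preimage_le B).trans hμB
        · exact ((hσ i).snd.measure_preimage_le Kᶜ).trans (hνK ν rfl)
        · exact (meas_ge_le_lintegral_div hF.aemeasurable hc0 hctop).trans hi
    _ = ε := ENNReal.add_thirds ε

lemma tendsto_measure_lt_edist_of_isOptimalMap [CompleteSpace Y] {c : X × Y → ℝ≥0∞}
    (hc : Measurable c) (hctop : ∀ q, c q ≠ ⊤) (hccont : ∀ x, Continuous fun y => c (x, y))
    {μ : Measure X} [IsProbabilityMeasure μ] {ν : Measure Y} (hT : IsOptimalMap c T μ ν)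
    (hfin : transportCost c μ ν ≠ ⊤)
    (hstrict : ∀ᵐ x ∂μ, ∀ y, y ≠ T x →
      0 < μ {x' | c (x, T x') + c (x', y) < c (x, y) + c (x', T x')})
    {ι : Type*} {l : Filter ι} {σ : ι → Measure (X × Y)} (hσ : ∀ i, IsCoupling (σ i) μ ν)
    (hlim : Tendsto (fun i => ∫⁻ q, c q ∂σ i) l (𝓝 (transportCost c μ ν))) {r : ℝ≥0∞}
    (hr : 0 < r) :
    Tendsto (fun i => σ i {q | r < edist (T q.1) q.2}) l (𝓝 0) := by
  have hTmeas : Measurable T := hT.measurePreserving.measurable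
  have : IsProbabilityMeasure ν :=
    isProbabilityMeasure_of_measurePreserving hT.measurePreserving
  have excess_tendsto :
      Tendsto (fun i => ∫⁻ q, c q ∂σ i - transportCost c μ ν) l (𝓝 0) := by
    simpa only [tsub_self] using
      ENNReal.Tendsto.sub hlim (tendsto_const_nhds (x := transportCost c μ ν)) (.inl hfin)
  have gain_tendsto : Tendsto (fun i => ∫⁻ q, meanSwapGain c μ T q ∂σ i) l (𝓝 0) :=
    tendsto_nhds_bot_mono excess_tendsto
      (.of_forall fun i => lintegral_meanSwapGain_le hc (hσ i) hT hfin)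
  exact tendsto_measure_lt_edist_graph (measurable_meanSwapGain hc hTmeas)
    (continuous_meanSwapGain_prodMk_left hc hctop hccont hTmeas) hTmeas
    (hstrict.mono fun x hx y hy => meanSwapGain_pos hc hTmeas (hx y hy)) hσ gain_tendsto hr

end Concentration

section UniformIntegrability

variable {Ω Y ι : Type*} [MeasurableSpace Ω] [MeasurableSpace Y] {l : Filter ι}
  {ρ : ι → Measure Ω} {ν : Measure Y}

lemma tendsto_lintegral_tsub_natCast {f : Y → ℝ≥0∞} (hf : Measurable f)
    (hfin : ∫⁻ y, f y ∂ν ≠ ⊤) :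
    Tendsto (fun n : ℕ => ∫⁻ y, f y - n ∂ν) atTop (𝓝 0) := by
  rw [← lintegral_zero (μ := ν)]
  refine tendsto_lintegral_of_dominated_convergence f (fun n => hf.sub_const _)
    (fun n => .of_forall fun y => tsub_le_self) hfin ?_
  filter_upwards [ae_lt_top hf hfin] with y hy
  simpa only [ENNReal.sub_top] using ENNReal.Tendsto.sub (tendsto_const_nhds (x := f y))
    ENNReal.tendsto_nat_nhds_top (.inl hy.ne)

lemma tendsto_setLIntegral_comp_zero {f : Y → ℝ≥0∞} (hf : Measurable f)
    (hfin : ∫⁻ y, f y ∂ν ≠ ⊤) {g : ι → Ω → Y} (hg : ∀ i, MeasurePreserving (g i) (ρ i) ν)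
    {s : ι → Set Ω} (hs : Tendsto (fun i => ρ i (s i)) l (𝓝 0)) :
    Tendsto (fun i => ∫⁻ ω in s i, f (g i ω) ∂ρ i) l (𝓝 0) := by
  refine ENNReal.tendsto_nhds_zero.mpr fun ε hε => ?_
  have hε2 : 0 < ε / 2 := ENNReal.half_pos hε.ne'
  obtain ⟨n, hn⟩ :=
    ((tendsto_lintegral_tsub_natCast hf hfin).eventually_le_const hε2).exists
  have hns : Tendsto (fun i => n * ρ i (s i)) l (𝓝 0) := by
    simpa only [mul_zero] using
      ENNReal.Tendsto.const_mul hs (.inr (ENNReal.natCast_ne_top n))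
  filter_upwards [hns.eventually_le_const hε2] with i hi
  calc ∫⁻ ω in s i, f (g i ω) ∂ρ i ≤ ∫⁻ ω in s i, (f (g i ω) - n) + n ∂ρ i :=
        lintegral_mono fun _ => le_tsub_add
    _ = ∫⁻ ω in s i, f (g i ω) - n ∂ρ i + n * ρ i (s i) := by
        rw [lintegral_add_right _ measurable_const, setLIntegral_const]
    _ ≤ ∫⁻ y, f y - n ∂ν + n * ρ i (s i) := by
        gcongr
        exact (setLIntegral_le_lintegral _ _).trans_eq
          ((hg i).lintegral_comp (hf.sub_const _))
    _ ≤ ε / 2 + ε / 2 := add_le_add hn hi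
    _ = ε := ENNReal.add_halves ε

lemma tendsto_lintegral_enorm_sub_rpow_zero {E : Type*} [NormedAddCommGroup E]
    [MeasurableSpace E] [BorelSpace E] [SecondCountableTopology E] {ν : Measure E} {p : ℝ}
    (hp : 1 ≤ p) (hmom : ∫⁻ y, ‖y‖ₑ ^ p ∂ν ≠ ⊤) [∀ i, IsProbabilityMeasure (ρ i)]
    {g h : ι → Ω → E} (hg : ∀ i, MeasurePreserving (g i) (ρ i) ν)
    (hh : ∀ i, MeasurePreserving (h i) (ρ i) ν)
    (hlim : ∀ r : ℝ≥0∞, 0 < r → Tendsto (fun i => ρ i {ω | r < edist (g i ω) (h i ω)}) l (𝓝 0)) :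
    Tendsto (fun i => ∫⁻ ω, ‖g i ω - h i ω‖ₑ ^ p ∂ρ i) l (𝓝 0) := by
  have hp0 : 0 < p := zero_lt_one.trans_le hp
  refine ENNReal.tendsto_nhds_zero.mpr fun ε hε => ?_
  have hε2 : 0 < ε / 2 := ENNReal.half_pos hε.ne'
  set r : ℝ≥0∞ := (ε / 2) ^ p⁻¹
  have hr : 0 < r := ENNReal.rpow_pos_of_nonneg hε2 (by positivity)
  let s (i : ι) : Set Ω := {ω | r < edist (g i ω) (h i ω)}
  have hs (i) : MeasurableSet (s i) :=
    measurableSet_lt measurable_const ((hg i).measurable.edist (hh i).measurable)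
  have far : Tendsto (fun i => 2 ^ (p - 1) *
      (∫⁻ ω in s i, ‖g i ω‖ₑ ^ p ∂ρ i + ∫⁻ ω in s i, ‖h i ω‖ₑ ^ p ∂ρ i)) l (𝓝 0) := by
    have hsum := (tendsto_setLIntegral_comp_zero (by fun_prop) hmom hg (hlim r hr)).add
      (tendsto_setLIntegral_comp_zero (by fun_prop) hmom hh (hlim r hr))
    simpa only [add_zero, mul_zero] using ENNReal.Tendsto.const_mul hsum
      (.inr (ENNReal.rpow_ne_top_of_nonneg (sub_nonneg.mpr hp) ENNReal.ofNat_ne_top))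
  filter_upwards [far.eventually_le_const hε2] with i hi
  have far_le : ∫⁻ ω in s i, ‖g i ω - h i ω‖ₑ ^ p ∂ρ i ≤ ε / 2 := by
    refine le_trans ?_ hi
    have hgi : Measurable fun ω => ‖g i ω‖ₑ ^ p := (hg i).measurable.enorm.pow_const p
    rw [← lintegral_add_left hgi, ← lintegral_const_mul' _ _
      (ENNReal.rpow_ne_top_of_nonneg (sub_nonneg.mpr hp) ENNReal.ofNat_ne_top)]
    exact lintegral_mono fun ω => (ENNReal.rpow_le_rpow enorm_sub_le hp0.le).trans
      (ENNReal.rpow_add_le_mul_rpow_add_rpow _ _ hp)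
  have near_le : ∫⁻ ω in (s i)ᶜ, ‖g i ω - h i ω‖ₑ ^ p ∂ρ i ≤ ε / 2 := by
    calc ∫⁻ ω in (s i)ᶜ, ‖g i ω - h i ω‖ₑ ^ p ∂ρ i ≤ ∫⁻ _ in (s i)ᶜ, ε / 2 ∂ρ i := by
          refine setLIntegral_mono' (hs i).compl fun ω hω => ?_
          rw [← ENNReal.le_rpow_inv_iff hp0, ← edist_eq_enorm_sub]
          exact not_lt.mp hω
      _ ≤ ε / 2 := by
          rw [setLIntegral_const]
          exact mul_le_of_le_one_right' prob_le_one
  calc ∫⁻ ω, ‖g i ω - h i ω‖ₑ ^ p ∂ρ i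
      = ∫⁻ ω in s i, ‖g i ω - h i ω‖ₑ ^ p ∂ρ i +
          ∫⁻ ω in (s i)ᶜ, ‖g i ω - h i ω‖ₑ ^ p ∂ρ i := (lintegral_add_compl _ (hs i)).symm
    _ ≤ ε / 2 + ε / 2 := add_le_add far_le near_le
    _ = ε := ENNReal.add_halves ε

end UniformIntegrability

section Density

variable {E : Type*} [NormedAddCommGroup E] [NormedSpace ℝ E] [SecondCountableTopology E]
  [MeasurableSpace E] [BorelSpace E] {m μ : Measure E} [IsUnifLocDoublingMeasure m]
  [IsLocallyFiniteMeasure m]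

variable (m) in
lemma ae_eventually_measure_inter_closedBall_pos (A : Set E) :
    ∀ᵐ x ∂m, x ∈ A → ∀ (u : E) (s : ℝ), 0 < s →
      ∀ᶠ t in 𝓝[>] (0 : ℝ), 0 < m (A ∩ Metric.closedBall (x + t • u) (t * s)) := by
  have density := ae_all_iff.mpr fun K : ℕ =>
    ae_imp_of_ae_restrict (IsUnifLocDoublingMeasure.ae_tendsto_measure_inter_div m A K)
  filter_upwards [density] with x hx hxA u s hs
  obtain ⟨K, hK⟩ := exists_nat_ge (‖u‖ / s)
  have radius_tendsto : Tendsto (fun t : ℝ => t * s) (𝓝[>] 0) (𝓝[>] 0) := by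
    refine tendsto_nhdsWithin_iff.mpr ⟨?_, ?_⟩
    · simpa only [zero_mul] using
        ((continuous_mul_const s).tendsto 0).mono_left nhdsWithin_le_nhds
    · filter_upwards [self_mem_nhdsWithin] with t ht using mul_pos ht hs
  have mem_ball : ∀ᶠ t in 𝓝[>] (0 : ℝ), x ∈ Metric.closedBall (x + t • u) (K * (t * s)) := by
    filter_upwards [self_mem_nhdsWithin] with t (ht : 0 < t)
    rw [mem_closedBall_iff_norm', add_sub_cancel_left, norm_smul, Real.norm_of_nonneg ht.le,
      mul_left_comm]
    exact mul_le_mul_of_nonneg_left ((div_le_iff₀ hs).mp hK) ht.le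
  have ratio_tendsto := hx K hxA (fun t => x + t • u) (fun t => t * s) radius_tendsto mem_ball
  filter_upwards [ratio_tendsto.eventually_const_lt one_pos] with t ht
  exact pos_iff_ne_zero.mpr (ENNReal.div_pos_iff.mp ht).1

lemma ae_eventually_measure_inter_closedBall_pos_of_absolutelyContinuous [SFinite μ]
    (hμ : μ ≪ m) (A : Set E) :
    ∀ᵐ x ∂μ, x ∈ A → ∀ (u : E) (s : ℝ), 0 < s →
      ∀ᶠ t in 𝓝[>] (0 : ℝ), 0 < μ (A ∩ Metric.closedBall (x + t • u) (t * s)) := by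
  have measure_pos {B : Set E} (hB : 0 < m ({x | μ.rnDeriv m x ≠ 0} ∩ B)) : 0 < μ B := by
    contrapose! hB
    rw [nonpos_iff_eq_zero, ← Measure.withDensity_rnDeriv_eq μ m hμ] at hB
    exact ((withDensity_apply_eq_zero (Measure.measurable_rnDeriv μ m)).mp hB).le
  filter_upwards [Measure.rnDeriv_pos hμ, hμ.ae_le
    (ae_eventually_measure_inter_closedBall_pos m ({x | μ.rnDeriv m x ≠ 0} ∩ A))]
    with x hx hxA hA u s hs
  filter_upwards [hxA ⟨hx.ne', hA⟩ u s hs] with t ht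
  exact measure_pos (inter_assoc _ _ _ ▸ ht)

lemma ae_forall_mem_nhds_eventually_measure_preimage_inter_closedBall_pos [SFinite μ]
    {Y : Type*} [TopologicalSpace Y] [SecondCountableTopology Y] (hμ : μ ≪ m) (T : E → Y) :
    ∀ᵐ x ∂μ, ∀ V ∈ 𝓝 (T x), ∀ (u : E) (s : ℝ), 0 < s →
      ∀ᶠ t in 𝓝[>] (0 : ℝ), 0 < μ (T ⁻¹' V ∩ Metric.closedBall (x + t • u) (t * s)) := by
  filter_upwards [(ae_ball_iff (TopologicalSpace.countable_countableBasis Y)).mpr fun V _ =>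
    ae_eventually_measure_inter_closedBall_pos_of_absolutelyContinuous hμ (T ⁻¹' V)]
    with x hx V hV u s hs
  obtain ⟨W, hW, hxW, hWV⟩ :=
    (TopologicalSpace.isBasis_countableBasis Y).mem_nhds_iff.mp hV
  filter_upwards [hx W hW hxW u s hs] with t ht
  exact ht.trans_le (measure_mono (inter_subset_inter_left _ (preimage_mono hWV)))

end Density

section StrictMonotoneDerivative

variable {E : Type*} [NormedAddCommGroup E] [NormedSpace ℝ E] {f : E → ℝ}

lemma tendsto_inv_mul_sub_of_hasStrictFDerivAt {f' : E →L[ℝ] ℝ} {a : E}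
    (hf : HasStrictFDerivAt f f' a) (v : E) :
    Tendsto (fun z : ℝ × E × E => z.1⁻¹ * (f (z.2.2 + z.1 • z.2.1) - f z.2.2))
      (𝓝[>] 0 ×ˢ 𝓝 v ×ˢ 𝓝 a) (𝓝 (f' v)) := by
  have ht : Tendsto (fun z : ℝ × E × E => z.1) (𝓝[>] 0 ×ˢ 𝓝 v ×ˢ 𝓝 a) (𝓝 0) :=
    tendsto_fst.mono_right nhdsWithin_le_nhds
  have hv : Tendsto (fun z : ℝ × E × E => z.2.1) (𝓝[>] 0 ×ˢ 𝓝 v ×ˢ 𝓝 a) (𝓝 v) :=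
    tendsto_fst.comp tendsto_snd
  have ha : Tendsto (fun z : ℝ × E × E => z.2.2) (𝓝[>] 0 ×ˢ 𝓝 v ×ˢ 𝓝 a) (𝓝 a) :=
    tendsto_snd.comp tendsto_snd
  have hstep : Tendsto (fun z : ℝ × E × E => (z.2.2 + z.1 • z.2.1, z.2.2))
      (𝓝[>] 0 ×ˢ 𝓝 v ×ˢ 𝓝 a) (𝓝 (a, a)) := by
    simpa only [zero_smul, add_zero] using (ha.add (ht.smul hv)).prodMk_nhds ha
  have step_isBigO : (fun z : ℝ × E × E => z.1 • z.2.1) =O[𝓝[>] 0 ×ˢ 𝓝 v ×ˢ 𝓝 a]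
      fun z => z.1 := by
    simpa only [smul_eq_mul, mul_one] using
      (Asymptotics.isBigO_refl (fun z : ℝ × E × E => z.1) _).smul (hv.isBigO_one ℝ)
  have remainder : (fun z : ℝ × E × E =>
      f (z.2.2 + z.1 • z.2.1) - f z.2.2 - f' (z.1 • z.2.1)) =o[𝓝[>] 0 ×ˢ 𝓝 v ×ˢ 𝓝 a]
      fun z => z.1 := by
    simpa only [Function.comp_def, add_sub_cancel_left] using
      (hf.isLittleO.comp_tendsto hstep).trans_isBigO (step_isBigO.congr_left fun z =>
        (add_sub_cancel_left z.2.2 (z.1 • z.2.1)).symm)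
  have main := remainder.tendsto_div_nhds_zero.add ((f'.continuous.tendsto v).comp hv)
  rw [zero_add] at main
  refine main.congr' ?_
  filter_upwards [tendsto_fst.eventually self_mem_nhdsWithin] with z (hz : 0 < z.1)
  simp only [Function.comp_def, map_smul, smul_eq_mul]
  field_simp
  ring

lemma eventually_sub_lt_sub_of_hasStrictFDerivAt {f'a f'b : E →L[ℝ] ℝ} {a b v : E}
    (ha : HasStrictFDerivAt f f'a a) (hb : HasStrictFDerivAt f f'b b) (hlt : f'b v < f'a v) :
    ∀ᶠ z : ℝ × E × E in 𝓝[>] 0 ×ˢ 𝓝 v ×ˢ 𝓝 a,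
      f (b + z.1 • z.2.1) - f b < f (z.2.2 + z.1 • z.2.1) - f z.2.2 := by
  have hbase : Tendsto (fun z : ℝ × E × E => (z.1, z.2.1, b)) (𝓝[>] 0 ×ˢ 𝓝 v ×ˢ 𝓝 a)
      (𝓝[>] 0 ×ˢ 𝓝 v ×ˢ 𝓝 b) :=
    tendsto_fst.prodMk ((tendsto_fst.comp tendsto_snd).prodMk tendsto_const_nhds)
  filter_upwards [((tendsto_inv_mul_sub_of_hasStrictFDerivAt hb v).comp hbase).eventually_lt
      (tendsto_inv_mul_sub_of_hasStrictFDerivAt ha v) hlt,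
    tendsto_fst.eventually self_mem_nhdsWithin] with z hz (ht : 0 < z.1)
  exact lt_of_mul_lt_mul_left hz (inv_pos.mpr ht).le

lemma ae_forall_ne_measure_swap_lt_pos [SecondCountableTopology E] [MeasurableSpace E]
    [BorelSpace E] {m μ : Measure E} [IsUnifLocDoublingMeasure m] [IsLocallyFiniteMeasure m]
    [SFinite μ] (hμ : μ ≪ m) (T : E → E) {f' : E → E →L[ℝ] ℝ}
    (hf : ∀ x, HasStrictFDerivAt f (f' x) x)
    (hmono : ∀ a b, a ≠ b → f' b (a - b) < f' a (a - b)) :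
    ∀ᵐ x ∂μ, ∀ y, y ≠ T x → 0 < μ {x' | f (x - T x') + f (x' - y) < f (x - y) + f (x' - T x')} := by
  filter_upwards [ae_forall_mem_nhds_eventually_measure_preimage_inter_closedBall_pos hμ T]
    with x hx y hy
  have hlocal := eventually_sub_lt_sub_of_hasStrictFDerivAt (hf (x - T x)) (hf (x - y))
    (hmono _ _ (sub_right_injective.ne hy.symm))
  set v := x - T x - (x - y)
  obtain ⟨p, hp, q, hq, hpq⟩ := eventually_prod_iff.mp hlocal
  obtain ⟨pv, hpv, pa, hpa, hpva⟩ := eventually_prod_iff.mp hq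
  obtain ⟨s, hs, hsv⟩ := Metric.nhds_basis_closedBall.eventually_iff.mp hpv
  have hV : ∀ᶠ w in 𝓝 (T x), pa (x - w) :=
    ((continuous_const.sub continuous_id).tendsto (T x)).eventually hpa
  obtain ⟨t, ⟨hball, hpt⟩, ht⟩ :=
    (((hx _ hV v s hs).and hp).and self_mem_nhdsWithin).exists
  replace ht : 0 < t := ht
  refine hball.trans_le (measure_mono ?_)
  rintro x' ⟨hTx' : pa (x - T x'), hx'⟩
  have rescale : x' - (x + t • v) = t • (t⁻¹ • (x' - x) - v) := by
    rw [smul_sub t (t⁻¹ • (x' - x)), smul_inv_smul₀ ht.ne', sub_sub]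
  have hdir : t⁻¹ • (x' - x) ∈ Metric.closedBall v s := by
    rw [mem_closedBall_iff_norm, rescale, norm_smul, Real.norm_of_nonneg ht.le] at hx'
    exact mem_closedBall_iff_norm.mpr (le_of_mul_le_mul_left hx' ht)
  have hlt := hpq hpt (hpva (hsv hdir) hTx')
  simp only [smul_inv_smul₀ ht.ne', sub_add_sub_cancel'] at hlt
  change f (x - T x') + f (x' - y) < f (x - y) + f (x' - T x')
  linarith

end StrictMonotoneDerivative

section NormRpow

variable {E : Type*} [NormedAddCommGroup E] [InnerProductSpace ℝ E] {p : ℝ}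

lemma inner_norm_rpow_smul_sub_eq (hp : 1 < p) (a b : E) :
    inner ℝ (‖a‖ ^ (p - 2) • a - ‖b‖ ^ (p - 2) • b) (a - b) =
      (‖a‖ ^ (p - 1) - ‖b‖ ^ (p - 1)) * (‖a‖ - ‖b‖) +
        (‖a‖ ^ (p - 2) + ‖b‖ ^ (p - 2)) * (‖a‖ * ‖b‖ - inner ℝ a b) := by
  have rpow_sub_one (x : E) : ‖x‖ ^ (p - 1) = ‖x‖ ^ (p - 2) * ‖x‖ := by
    rw [← Real.rpow_add_one' (norm_nonneg x) (by linarith)]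
    ring_nf
  simp only [inner_sub_left, inner_sub_right, real_inner_smul_left, real_inner_self_eq_norm_sq,
    real_inner_comm a b, rpow_sub_one]
  ring

lemma inner_norm_rpow_smul_sub_pos (hp : 1 < p) {a b : E} (hab : a ≠ b) :
    0 < inner ℝ (‖a‖ ^ (p - 2) • a - ‖b‖ ^ (p - 2) • b) (a - b) := by
  rw [inner_norm_rpow_smul_sub_eq hp]
  have hp1 : 0 < p - 1 := sub_pos.mpr hp
  have angular : 0 ≤ (‖a‖ ^ (p - 2) + ‖b‖ ^ (p - 2)) * (‖a‖ * ‖b‖ - inner ℝ a b) :=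
    mul_nonneg (by positivity) (sub_nonneg.mpr (real_inner_le_norm a b))
  rcases lt_trichotomy ‖a‖ ‖b‖ with h | h | h
  · exact add_pos_of_pos_of_nonneg (mul_pos_of_neg_of_neg
      (sub_neg.mpr (Real.rpow_lt_rpow (norm_nonneg a) h hp1)) (sub_neg.mpr h)) angular
  · have hb : 0 < ‖b‖ := norm_pos_iff.mpr fun hb => hab <| by
      rw [hb, ← norm_eq_zero, h, hb, norm_zero]
    have strict : inner ℝ a b < ‖a‖ * ‖b‖ := inner_lt_norm_mul_iff_real.mpr fun hsmul =>
      hab (smul_right_injective E hb.ne' (h ▸ hsmul))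
    rw [h, sub_self, sub_self, zero_mul, zero_add]
    exact mul_pos (by positivity) (sub_pos.mpr (h ▸ strict))
  · exact add_pos_of_pos_of_nonneg (mul_pos
      (sub_pos.mpr (Real.rpow_lt_rpow (norm_nonneg b) h hp1)) (sub_pos.mpr h)) angular

lemma hasStrictFDerivAt_norm_rpow (hp : 1 < p) (x : E) :
    HasStrictFDerivAt (fun x : E => ‖x‖ ^ p) ((p * ‖x‖ ^ (p - 2)) • innerSL ℝ x) x :=
  (contDiff_norm_rpow hp).contDiffAt.hasStrictFDerivAt' (hasFDerivAt_norm_rpow x hp) one_ne_zero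

lemma fderiv_norm_rpow_apply_sub_lt (hp : 1 < p) {a b : E} (hab : a ≠ b) :
    ((p * ‖b‖ ^ (p - 2)) • innerSL ℝ b) (a - b) < ((p * ‖a‖ ^ (p - 2)) • innerSL ℝ a) (a - b) := by
  have h := inner_norm_rpow_smul_sub_pos hp hab
  rw [inner_sub_left, sub_pos, real_inner_smul_left, real_inner_smul_left] at h
  simpa only [smul_apply, innerSL_apply_apply, smul_eq_mul, mul_assoc] using
    mul_lt_mul_of_pos_left h (zero_lt_one.trans hp)

end NormRpow

section PowCost

variable {E Ω : Type*} [NormedAddCommGroup E] [MeasurableSpace Ω] {p : ℝ}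

/-- The cost `(x, y) ↦ ‖x - y‖ ^ p`, whose optimal transport cost is the `p`-th power of the
`L^p`-Wasserstein distance. -/
noncomputable def powCost (p : ℝ) (q : E × E) : ℝ≥0∞ :=
  ‖q.1 - q.2‖ₑ ^ p

/-- The cost `(x, y) ↦ ‖x - y‖ ^ p + ‖f x - g y‖ ^ p`, whose optimal transport cost between `μ` and
`ν` is the `p`-th power of the `TL^p` distance between `(μ, f)` and `(ν, g)`. -/
noncomputable def tlpCost (p : ℝ) (f g : E → E) (q : E × E) : ℝ≥0∞ :=
  powCost p q + powCost p (f q.1, g q.2)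

lemma ofReal_norm_rpow (hp : 0 ≤ p) (x : E) : ENNReal.ofReal (‖x‖ ^ p) = ‖x‖ₑ ^ p := by
  rw [← ENNReal.ofReal_rpow_of_nonneg (norm_nonneg x) hp, ofReal_norm]

lemma ofReal_norm_rpow_add (hp : 0 ≤ p) (x y : E) :
    ENNReal.ofReal (‖x‖ ^ p + ‖y‖ ^ p) = ‖x‖ₑ ^ p + ‖y‖ₑ ^ p := by
  rw [ENNReal.ofReal_add (by positivity) (by positivity), ofReal_norm_rpow hp, ofReal_norm_rpow hp]

lemma eLpNorm_sub_ofReal_rpow (hp : 0 < p) (f g : Ω → E) (P : Measure Ω) :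
    eLpNorm (f - g) (ENNReal.ofReal p) P ^ p = ∫⁻ ω, powCost p (f ω, g ω) ∂P := by
  rw [eLpNorm_eq_lintegral_rpow_enorm_toReal (ENNReal.ofReal_pos.mpr hp).ne' ENNReal.ofReal_ne_top,
    ENNReal.toReal_ofReal hp.le, ← ENNReal.rpow_mul, one_div_mul_cancel hp.ne', ENNReal.rpow_one]
  rfl

lemma tendsto_eLpNorm_sub_ofReal_zero_iff (hp : 0 < p) {ι : Type*} {l : Filter ι}
    {f g : ι → Ω → E} {P : ι → Measure Ω} :
    Tendsto (fun i => eLpNorm (f i - g i) (ENNReal.ofReal p) (P i)) l (𝓝 0) ↔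
      Tendsto (fun i => ∫⁻ ω, powCost p (f i ω, g i ω) ∂P i) l (𝓝 0) := by
  simp only [← eLpNorm_sub_ofReal_rpow hp]
  refine ⟨fun h => ?_, fun h => ?_⟩
  · simpa only [ENNReal.zero_rpow_of_pos hp] using h.ennrpow_const p
  · simpa only [ENNReal.rpow_rpow_inv hp.ne', ENNReal.zero_rpow_of_pos (inv_pos.mpr hp)] using
      h.ennrpow_const p⁻¹

variable [MeasurableSpace E] [BorelSpace E]

lemma measurable_powCost [SecondCountableTopology E] (p : ℝ) : Measurable (powCost (E := E) p) := by
  unfold powCost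
  fun_prop

lemma transportCost_powCost_comm [SecondCountableTopology E] (μ ν : Measure E) :
    transportCost (powCost p) μ ν = transportCost (powCost p) ν μ := by
  have le_swap (μ ν : Measure E) :
      transportCost (powCost p) μ ν ≤ transportCost (powCost p) ν μ := by
    refine le_iInf₂ fun π hπ => (transportCost_le_lintegral hπ.swap).trans_eq ?_
    rw [lintegral_map (measurable_powCost p) measurable_swap]
    simp only [powCost, Prod.fst_swap, Prod.snd_swap, enorm_sub_rev]
  exact (le_swap μ ν).antisymm (le_swap ν μ)

lemma ae_forall_ne_measure_powCost_swap_lt_pos {E : Type*} [NormedAddCommGroup E]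
    [InnerProductSpace ℝ E] [SecondCountableTopology E] [MeasurableSpace E] [BorelSpace E]
    {m μ : Measure E} [IsUnifLocDoublingMeasure m] [IsLocallyFiniteMeasure m] [SFinite μ]
    (hμ : μ ≪ m) (hp : 1 < p) (T : E → E) :
    ∀ᵐ x ∂μ, ∀ y, y ≠ T x → 0 < μ {x' | powCost p (x, T x') + powCost p (x', y) <
      powCost p (x, y) + powCost p (x', T x')} := by
  filter_upwards [ae_forall_ne_measure_swap_lt_pos hμ T (hasStrictFDerivAt_norm_rpow hp)
    fun a b => fderiv_norm_rpow_apply_sub_lt hp] with x hx y hy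
  refine (hx y hy).trans_le (measure_mono fun x' hx' => ?_)
  have h := (ENNReal.ofReal_lt_ofReal_iff_of_nonneg (by positivity)).mpr (mem_ofPred_eq ▸ hx')
  rwa [ofReal_norm_rpow_add (zero_lt_one.trans hp).le,
    ofReal_norm_rpow_add (zero_lt_one.trans hp).le] at h

lemma tendsto_lintegral_powCost_graph {E : Type*} [NormedAddCommGroup E] [InnerProductSpace ℝ E]
    [CompleteSpace E] [SecondCountableTopology E] [MeasurableSpace E] [BorelSpace E]
    {m μ ν : Measure E} [IsUnifLocDoublingMeasure m] [IsLocallyFiniteMeasure m]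
    [IsProbabilityMeasure μ] (hμ : μ ≪ m) (hp : 1 < p) (hν : ∫⁻ y, ‖y‖ₑ ^ p ∂ν ≠ ⊤) {T : E → E}
    (hT : IsOptimalMap (powCost p) T μ ν) (hfin : transportCost (powCost p) μ ν ≠ ⊤)
    {ι : Type*} {l : Filter ι} {σ : ι → Measure (E × E)} (hσ : ∀ i, IsCoupling (σ i) μ ν)
    (hlim : Tendsto (fun i => ∫⁻ q, powCost p q ∂σ i) l (𝓝 (transportCost (powCost p) μ ν))) :
    Tendsto (fun i => ∫⁻ q, powCost p (T q.1, q.2) ∂σ i) l (𝓝 0) := by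
  have hp0 : 0 ≤ p := (zero_lt_one.trans hp).le
  have : ∀ i, IsProbabilityMeasure (σ i) := fun i => (hσ i).isProbabilityMeasure
  refine tendsto_lintegral_enorm_sub_rpow_zero hp.le hν
    (fun i => hT.measurePreserving.comp (hσ i).fst) (fun i => (hσ i).snd) fun r hr => ?_
  refine tendsto_measure_lt_edist_of_isOptimalMap (measurable_powCost p)
    (fun q => ENNReal.rpow_ne_top_of_nonneg hp0 enorm_ne_top) (fun x => ?_) hT hfin
    (ae_forall_ne_measure_powCost_swap_lt_pos hμ hp T) hσ hlim hr
  exact (ENNReal.continuous_rpow_const.comp continuous_enorm).comp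
    (continuous_const.sub continuous_id)

end PowCost

section Gluing

variable {E : Type*} [NormedAddCommGroup E] [MeasurableSpace E] [BorelSpace E]
  [SecondCountableTopology E] {q : ℝ≥0∞}

section RandomVariables

variable {Ω : Type*} [MeasurableSpace Ω] {P : Measure Ω}

lemma eLpNorm_sub_le_add (hq : 1 ≤ q) {f g h : Ω → E} (hf : Measurable f) (hg : Measurable g)
    (hh : Measurable h) :
    eLpNorm (f - h) q P ≤ eLpNorm (f - g) q P + eLpNorm (g - h) q P := by
  rw [← sub_add_sub_cancel f g h]
  exact eLpNorm_add_le (hf.sub hg).aestronglyMeasurable (hg.sub hh).aestronglyMeasurable hq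

lemma eLpNorm_comp_sub_comp {Y : Type*} [MeasurableSpace Y] {ρ : Measure Y} {f : Ω → Y}
    (hf : MeasurePreserving f P ρ) {g h : Y → E} (hg : Measurable g) (hh : Measurable h) :
    eLpNorm (g ∘ f - h ∘ f) q P = eLpNorm (g - h) q ρ :=
  eLpNorm_comp_measurePreserving (hg.sub hh).aestronglyMeasurable hf

end RandomVariables

lemma eLpNorm_fst_sub_snd_map_swap {θ : Measure (E × E)} :
    eLpNorm (Prod.fst - Prod.snd) q (θ.map Prod.swap) = eLpNorm (Prod.fst - Prod.snd) q θ := by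
  rw [eLpNorm_map_measure (measurable_fst.sub measurable_snd).aestronglyMeasurable
    measurable_swap.aemeasurable]
  exact eLpNorm_sub_comm _ _ _ _

lemma IsCoupling.exists_glue [CompleteSpace E] {μ₁ μ₂ ν₁ ν₂ : Measure E} [IsProbabilityMeasure μ₁]
    (hq : 1 ≤ q) {θ η : Measure (E × E)} (hθ : IsCoupling θ μ₁ μ₂) (hη : IsCoupling η ν₁ ν₂)
    {S : E → E} (hS : MeasurePreserving S μ₂ ν₁) :
    ∃ σ, IsCoupling σ μ₁ ν₂ ∧
      eLpNorm (Prod.fst - Prod.snd) q σ ≤ eLpNorm (Prod.fst - Prod.snd) q θ +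
        eLpNorm (id - S) q μ₂ + eLpNorm (Prod.fst - Prod.snd) q η ∧
      ∀ U : E → E, Measurable U → eLpNorm (U ∘ Prod.fst - S ∘ Prod.snd) q θ ≤
        eLpNorm (U ∘ Prod.fst - Prod.snd) q σ + eLpNorm (Prod.fst - Prod.snd) q η := by
  have : IsProbabilityMeasure θ := hθ.isProbabilityMeasure
  have : IsProbabilityMeasure ν₁ :=
    isProbabilityMeasure_of_measurePreserving (hS.comp hθ.snd)
  have : IsProbabilityMeasure η := hη.isProbabilityMeasure
  obtain ⟨Q, hQθ, hQη⟩ := exists_measurePreserving_fst_and_comp (hS.comp hθ.snd) hη.fst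
  let x (z : (E × E) × E) : E := z.1.1
  let x' (z : (E × E) × E) : E := z.1.2
  let y (z : (E × E) × E) : E := z.2
  have hx : MeasurePreserving x Q μ₁ := hθ.fst.comp hQθ
  have hx' : MeasurePreserving x' Q μ₂ := hθ.snd.comp hQθ
  have hy : MeasurePreserving y Q ν₂ := hη.snd.comp hQη
  have hSx' : Measurable (S ∘ x') := hS.measurable.comp hx'.measurable
  have hσ : MeasurePreserving (fun z => (x z, y z)) Q (Q.map fun z => (x z, y z)) :=
    (hx.measurable.prodMk hy.measurable).measurePreserving Q
  have norm_η : eLpNorm (S ∘ x' - y) q Q = eLpNorm (Prod.fst - Prod.snd) q η := by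
    rw [← eLpNorm_comp_sub_comp hQη measurable_fst measurable_snd]
    rfl
  refine ⟨_, isCoupling_map_prodMk hx hy, ?_, fun U hU => ?_⟩
  · rw [← eLpNorm_comp_sub_comp hσ measurable_fst measurable_snd,
      ← eLpNorm_comp_sub_comp hQθ measurable_fst measurable_snd,
      ← eLpNorm_comp_sub_comp hx' measurable_id hS.measurable, ← norm_η]
    exact (eLpNorm_sub_le_add hq hx.measurable hSx' hy.measurable).trans
      (add_le_add_left (eLpNorm_sub_le_add hq hx.measurable hx'.measurable hSx') _)
  · rw [← eLpNorm_comp_sub_comp hσ (hU.comp measurable_fst) measurable_snd,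
      ← eLpNorm_comp_sub_comp hQθ (hU.comp measurable_fst) (hS.measurable.comp measurable_snd),
      ← norm_η, eLpNorm_sub_comm (S ∘ x')]
    exact eLpNorm_sub_le_add hq (hU.comp hx.measurable) hy.measurable hSx'

end Gluing

section Stability

variable {E : Type*} [NormedAddCommGroup E] [MeasurableSpace E] {p : ℝ} {μ ν : Measure E}
  {T : E → E}

lemma memLp_id_ofReal [BorelSpace E] [SecondCountableTopology E] (hp : 0 < p)
    (h : ∫⁻ x, ‖x‖ₑ ^ p ∂μ ≠ ⊤) : MemLp id (ENNReal.ofReal p) μ := by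
  refine ⟨measurable_id.aestronglyMeasurable, (eLpNorm_lt_top_iff_lintegral_rpow_enorm_lt_top
    (ENNReal.ofReal_pos.mpr hp).ne' ENNReal.ofReal_ne_top).mpr ?_⟩
  simpa only [id, ENNReal.toReal_ofReal hp.le] using lt_top_iff_ne_top.mpr h

namespace IsOptimalMap

lemma eLpNorm_id_sub_rpow (hp : 0 < p) (hT : IsOptimalMap (powCost p) T μ ν) :
    eLpNorm (id - T) (ENNReal.ofReal p) μ ^ p = transportCost (powCost p) μ ν :=
  (eLpNorm_sub_ofReal_rpow hp _ _ _).trans hT.lintegral_eq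

lemma eLpNorm_id_sub_le (hp : 0 < p) (hT : IsOptimalMap (powCost p) T μ ν) {σ : Measure (E × E)}
    (hσ : IsCoupling σ μ ν) :
    eLpNorm (id - T) (ENNReal.ofReal p) μ ≤ eLpNorm (Prod.fst - Prod.snd) (ENNReal.ofReal p) σ := by
  rw [← ENNReal.rpow_le_rpow_iff hp, hT.eLpNorm_id_sub_rpow hp, eLpNorm_sub_ofReal_rpow hp]
  exact transportCost_le_lintegral hσ

variable [BorelSpace E] [SecondCountableTopology E]

lemma transportCost_ne_top (hp : 1 ≤ p) (hT : IsOptimalMap (powCost p) T μ ν)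
    (hμ : ∫⁻ x, ‖x‖ₑ ^ p ∂μ ≠ ⊤) (hν : ∫⁻ y, ‖y‖ₑ ^ p ∂ν ≠ ⊤) :
    transportCost (powCost p) μ ν ≠ ⊤ := by
  have hp0 : 0 < p := zero_lt_one.trans_le hp
  have hT_memLp : MemLp T (ENNReal.ofReal p) μ :=
    (memLp_id_ofReal hp0 hν).comp_measurePreserving hT.measurePreserving
  rw [← hT.eLpNorm_id_sub_rpow hp0]
  exact ENNReal.rpow_ne_top_of_nonneg hp0.le ((memLp_id_ofReal hp0 hμ).sub hT_memLp).2.ne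

lemma eLpNorm_id_sub_le_add [CompleteSpace E] [IsProbabilityMeasure μ] (hp : 1 ≤ p)
    (hT : IsOptimalMap (powCost p) T μ ν) {μ' ν' : Measure E} {S : E → E}
    (hS : MeasurePreserving S μ' ν') {θ η : Measure (E × E)} (hθ : IsCoupling θ μ' μ)
    (hη : IsCoupling η ν ν') :
    eLpNorm (id - T) (ENNReal.ofReal p) μ ≤ eLpNorm (Prod.fst - Prod.snd) (ENNReal.ofReal p) θ +
      eLpNorm (id - S) (ENNReal.ofReal p) μ' +
        eLpNorm (Prod.fst - Prod.snd) (ENNReal.ofReal p) η := by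
  obtain ⟨σ, hσ, hσ_le, -⟩ := hθ.swap.exists_glue (ENNReal.one_le_ofReal.mpr hp) hη.swap hS
  rw [eLpNorm_fst_sub_snd_map_swap, eLpNorm_fst_sub_snd_map_swap] at hσ_le
  exact (hT.eLpNorm_id_sub_le (zero_lt_one.trans_le hp) hσ).trans hσ_le

end IsOptimalMap

lemma tendsto_lintegral_powCost_comp_of_isOptimalMap {E : Type*} [NormedAddCommGroup E]
    [InnerProductSpace ℝ E] [CompleteSpace E] [SecondCountableTopology E] [MeasurableSpace E]
    [BorelSpace E] {m μ ν : Measure E} [IsUnifLocDoublingMeasure m] [IsLocallyFiniteMeasure m]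
    [IsProbabilityMeasure μ] (hμm : μ ≪ m) (hp : 1 < p) (hμ : ∫⁻ x, ‖x‖ₑ ^ p ∂μ ≠ ⊤)
    (hν : ∫⁻ y, ‖y‖ₑ ^ p ∂ν ≠ ⊤) {T : E → E} (hT : IsOptimalMap (powCost p) T μ ν)
    {ι : Type*} {l : Filter ι} {μ' ν' : ι → Measure E} [∀ i, IsProbabilityMeasure (μ' i)]
    {S : ι → E → E} (hS : ∀ i, IsOptimalMap (powCost p) (S i) (μ' i) (ν' i))
    {θ η : ι → Measure (E × E)} (hθ : ∀ i, IsCoupling (θ i) μ (μ' i))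
    (hη : ∀ i, IsCoupling (η i) (ν' i) ν)
    (hθlim : Tendsto (fun i => ∫⁻ q, powCost p q ∂θ i) l (𝓝 0))
    (hηlim : Tendsto (fun i => ∫⁻ q, powCost p q ∂η i) l (𝓝 0)) :
    Tendsto (fun i => ∫⁻ q, powCost p (T q.1, S i q.2) ∂θ i) l (𝓝 0) := by
  have hp0 : 0 < p := zero_lt_one.trans hp
  let w := eLpNorm (id - T) (ENNReal.ofReal p) μ
  let N (π : Measure (E × E)) := eLpNorm (Prod.fst - Prod.snd) (ENNReal.ofReal p) π
  have hNθ : Tendsto (fun i => N (θ i)) l (𝓝 0) :=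
    (tendsto_eLpNorm_sub_ofReal_zero_iff hp0).mpr hθlim
  have hNη : Tendsto (fun i => N (η i)) l (𝓝 0) :=
    (tendsto_eLpNorm_sub_ofReal_zero_iff hp0).mpr hηlim
  choose σ hσ hσ_le hU using fun i =>
    (hθ i).exists_glue (ENNReal.one_le_ofReal.mpr hp.le) (hη i) (hS i).measurePreserving
  have norm_σ_le (i) : N (σ i) ≤ N (θ i) + (N (θ i) + w + N (η i)) + N (η i) :=
    (hσ_le i).trans (by
      gcongr
      exact (hS i).eLpNorm_id_sub_le_add hp.le hT.measurePreserving (hθ i) (hη i))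
  have norm_σ_tendsto : Tendsto (fun i => N (σ i)) l (𝓝 w) := by
    refine tendsto_of_tendsto_of_tendsto_of_le_of_le tendsto_const_nhds ?_
      (fun i => hT.eLpNorm_id_sub_le hp0 (hσ i)) norm_σ_le
    simpa only [zero_add, add_zero] using
      (hNθ.add ((hNθ.add (tendsto_const_nhds (x := w))).add hNη)).add hNη
  have cost_σ_tendsto :
      Tendsto (fun i => ∫⁻ q, powCost p q ∂σ i) l (𝓝 (transportCost (powCost p) μ ν)) := by
    have h := norm_σ_tendsto.ennrpow_const p
    simp only [w, N, hT.eLpNorm_id_sub_rpow hp0, eLpNorm_sub_ofReal_rpow hp0] at h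
    exact h
  have graph_tendsto : Tendsto (fun i =>
      eLpNorm (T ∘ Prod.fst - Prod.snd) (ENNReal.ofReal p) (σ i)) l (𝓝 0) :=
    (tendsto_eLpNorm_sub_ofReal_zero_iff hp0).mpr <| tendsto_lintegral_powCost_graph hμm hp hν hT
      (hT.transportCost_ne_top hp.le hμ hν) hσ cost_σ_tendsto
  refine (tendsto_eLpNorm_sub_ofReal_zero_iff hp0).mp <|
    tendsto_nhds_bot_mono ?_ (.of_forall fun i => hU i T hT.measurePreserving.measurable)
  simpa only [N, bot_eq_zero, add_zero] using graph_tendsto.add hNη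

theorem optimal_map_TLp_stability_general {E : Type*} [NormedAddCommGroup E]
    [InnerProductSpace ℝ E] [CompleteSpace E] [SecondCountableTopology E] [MeasurableSpace E]
    [BorelSpace E] {m μl νl : Measure E} [IsUnifLocDoublingMeasure m] [IsLocallyFiniteMeasure m]
    [IsProbabilityMeasure μl] (hμlm : μl ≪ m) (hp : 1 < p)
    (hμl : ∫⁻ x, ‖x‖ₑ ^ p ∂μl ≠ ⊤) (hνl : ∫⁻ y, ‖y‖ₑ ^ p ∂νl ≠ ⊤)
    {Tl : E → E} (hTl : IsOptimalMap (powCost p) Tl μl νl)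
    {ι : Type*} {l : Filter ι} {μ ν : ι → Measure E} [∀ i, IsProbabilityMeasure (μ i)]
    {T : ι → E → E} (hT : ∀ i, IsOptimalMap (powCost p) (T i) (μ i) (ν i))
    (hμlim : Tendsto (fun i => transportCost (powCost p) (μ i) μl) l (𝓝 0))
    (hνlim : Tendsto (fun i => transportCost (powCost p) (ν i) νl) l (𝓝 0)) :
    Tendsto (fun i => transportCost (tlpCost p Tl (T i)) μl (μ i)) l (𝓝 0) := by
  have : IsProbabilityMeasure νl := isProbabilityMeasure_of_measurePreserving hTl.measurePreserving
  have : ∀ i, IsProbabilityMeasure (ν i) := fun i =>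
    isProbabilityMeasure_of_measurePreserving (hT i).measurePreserving
  simp only [transportCost_powCost_comm (μ _)] at hμlim
  obtain ⟨θ, hθ, hθlim⟩ := exists_isCoupling_tendsto_lintegral hμlim
  obtain ⟨η, hη, hηlim⟩ := exists_isCoupling_tendsto_lintegral hνlim
  have hTlim := tendsto_lintegral_powCost_comp_of_isOptimalMap hμlm hp hμl hνl hTl
    (fun j => hT j.1) hθ hη hθlim hηlim
  have htlp : Tendsto (fun j : ι × ℕ => transportCost (tlpCost p Tl (T j.1)) μl (μ j.1))
      (l ×ˢ atTop) (𝓝 0) := by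
    refine tendsto_nhds_bot_mono ?_ (.of_forall fun j => transportCost_le_lintegral (hθ j))
    simpa only [tlpCost, lintegral_add_left (measurable_powCost p), bot_eq_zero, add_zero] using
      hθlim.add hTlim
  rwa [← map_fst_prod l (atTop : Filter ℕ), tendsto_map'_iff]

end Stability

lemma wpCost_eq_transportCost {d : ℕ} {p : ℝ} (hp : 0 ≤ p)
    (μ ν : Measure (EuclideanSpace ℝ (Fin d))) :
    WpCost p μ ν = transportCost (powCost p) μ ν := by
  simp only [WpCost, ofReal_norm_rpow hp]
  exact sInf_lintegral_eq_transportCost (powCost p) μ ν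

lemma sInf_lintegral_ofReal_eq_transportCost_tlpCost {E : Type*} [NormedAddCommGroup E]
    [MeasurableSpace E] {p : ℝ} (hp : 0 ≤ p) (f g : E → E) (μ ν : Measure E) :
    sInf {C | ∃ θ : Measure (E × E), θ.map Prod.fst = μ ∧ θ.map Prod.snd = ν ∧
      C = ∫⁻ q, ENNReal.ofReal (‖q.1 - q.2‖ ^ p + ‖f q.1 - g q.2‖ ^ p) ∂θ} =
        transportCost (tlpCost p f g) μ ν := by
  simp only [ofReal_norm_rpow_add hp]
  exact sInf_lintegral_eq_transportCost (tlpCost p f g) μ ν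

/-- Stability of optimal transport maps in the `TL^p` sense: if
`μ_k → μ` and `ν_k → ν` in `L^p`-Wasserstein distance, `μ_k, μ` absolutely continuous,
and `T_k, T` are the optimal transport maps, then
`d_{TL^p}((μ_k, T_k), (μ, T)) → 0`, i.e. the infimum over couplings `θ` of `μ` and `μ_k`
of `∫ (|x−y|^p + |T(x) − T_k(y)|^p) dθ` tends to `0`. -/
theorem optimal_map_TLp_stability
    (d : ℕ) (p : ℝ) (hp : 1 < p)
    (μ : ℕ → Measure (EuclideanSpace ℝ (Fin d))) (μl : Measure (EuclideanSpace ℝ (Fin d)))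
    (ν : ℕ → Measure (EuclideanSpace ℝ (Fin d))) (νl : Measure (EuclideanSpace ℝ (Fin d)))
    (hμprob : ∀ k, IsProbabilityMeasure (μ k)) (hμlprob : IsProbabilityMeasure μl)
    (hνprob : ∀ k, IsProbabilityMeasure (ν k)) (hνlprob : IsProbabilityMeasure νl)
    (hμac : ∀ k, μ k ≪ volume) (hμlac : μl ≪ volume)
    (hμmom : ∀ k, (∫⁻ x, ENNReal.ofReal (‖x‖ ^ p) ∂(μ k)) < ⊤)
    (hμlmom : (∫⁻ x, ENNReal.ofReal (‖x‖ ^ p) ∂μl) < ⊤)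
    (hνmom : ∀ k, (∫⁻ x, ENNReal.ofReal (‖x‖ ^ p) ∂(ν k)) < ⊤)
    (hνlmom : (∫⁻ x, ENNReal.ofReal (‖x‖ ^ p) ∂νl) < ⊤)
    (hμconv : Tendsto (fun k => WpCost p (μ k) μl) atTop (𝓝 0))
    (hνconv : Tendsto (fun k => WpCost p (ν k) νl) atTop (𝓝 0))
    (T : ℕ → EuclideanSpace ℝ (Fin d) → EuclideanSpace ℝ (Fin d))
    (Tl : EuclideanSpace ℝ (Fin d) → EuclideanSpace ℝ (Fin d))
    (hTmeas : ∀ k, Measurable (T k)) (hTlmeas : Measurable Tl)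
    (hTpush : ∀ k, (μ k).map (T k) = ν k) (hTlpush : μl.map Tl = νl)
    (hTopt : ∀ k, (∫⁻ x, ENNReal.ofReal (‖x - T k x‖ ^ p) ∂(μ k)) = WpCost p (μ k) (ν k))
    (hTlopt : (∫⁻ x, ENNReal.ofReal (‖x - Tl x‖ ^ p) ∂μl) = WpCost p μl νl) :
    Tendsto (fun k =>
      sInf { C | ∃ θ : Measure (EuclideanSpace ℝ (Fin d) × EuclideanSpace ℝ (Fin d)),
        θ.map Prod.fst = μl ∧ θ.map Prod.snd = μ k ∧
        C = ∫⁻ q, ENNReal.ofReal (‖q.1 - q.2‖ ^ p + ‖Tl q.1 - T k q.2‖ ^ p) ∂θ })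
      atTop (𝓝 0) := by
  have hp0 : 0 ≤ p := (zero_lt_one.trans hp).le
  simp only [wpCost_eq_transportCost hp0, ofReal_norm_rpow hp0] at *
  simp only [sInf_lintegral_ofReal_eq_transportCost_tlpCost hp0]
  exact optimal_map_TLp_stability_general hμlac hp hμlmom.ne hνlmom.ne
    ⟨⟨hTlmeas, hTlpush⟩, hTlopt⟩ (fun k => ⟨⟨hTmeas k, hTpush k⟩, hTopt k⟩) hμconv hνconv
end

section
/- Let ρ_0, ρ_1 : ℝ^d → [0,1] be measurable functions with compact support and equal positive integrals. Let ψ : ℝ^d → ℝ be convex and T : ℝ^d → ℝ^d a Borel map such that ψ is differentiable at Lebesgue-a.e. x with gradient ∇ψ(x) = T(x), and such that T_#(ρ_0 dx) = ρ_1 dx. For t ∈ [0,1] let μ_t = ((1−t)·id + t·T)_# (ρ_0 dx) be the displacement interpolant. Then for every t ∈ [0,1] and every Borel set A ⊆ ℝ^d one has μ_t(A) ≤ |A| (the Lebesgue measure of A); equivalently, μ_t is absolutely continuous with respect to Lebesgue measure with density at most 1 almost everywhere. -/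
open Set MeasureTheory
open scoped ENNReal

/-!
For `0 < t < 1`, let `S` be the resolvent `((1 - t) • id + t • ∂ψ)⁻¹` and
`R = t⁻¹ • (id - (1 - t) • S)`. At almost every `x` they send the interpolated point
`(1 - t) • x + t • T x` back to `x` and on to `T x`, so they push `μ_t` forward to the source and
the target measure. Both are Lipschitz gradients of convex functions, hence almost everywhere their
derivatives `M` and `N` are symmetric and positive, and `(1 - t) • M + t • N = 1`. In a common
eigenbasis the weighted AM-GM inequality gives `(det M) ^ (1 - t) * (det N) ^ t ≤ 1`. So almost
everywhere `S` or `R` does not increase volume infinitesimally, and the density bound for the source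
or the target measure passes to `μ_t` there.
-/

section

open Filter Topology
open scoped NNReal RealInnerProductSpace

section ConvexAnalysis

variable {E : Type*} [NormedAddCommGroup E] [InnerProductSpace ℝ E]

/-- `g` is a subgradient of `f` at `x`: the affine function of slope `g` that agrees with `f` at `x`
lies below `f`. -/
def IsSubgradientAt (f : E → ℝ) (g x : E) : Prop :=
  ∀ z, f x + ⟪g, z - x⟫ ≤ f z

variable {f : E → ℝ} {x y : E}

theorem IsSubgradientAt.const_mul {g : E} (hg : IsSubgradientAt f g x) {c : ℝ} (hc : 0 ≤ c) :
    IsSubgradientAt (fun z => c * f z) (c • g) x := fun z => by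
  rw [real_inner_smul_left, ← mul_add]
  exact mul_le_mul_of_nonneg_left (hg z) hc

theorem IsSubgradientAt.inner_sub_nonneg {u v : E} (hu : IsSubgradientAt f u x)
    (hv : IsSubgradientAt f v y) : 0 ≤ ⟪u - v, x - y⟫ := by
  have hxy := hu y
  have hyx := hv x
  rw [← neg_sub x y, inner_neg_right] at hxy
  rw [inner_sub_left]
  linarith

theorem isSubgradientAt_of_isMinOn_sub [CompleteSpace E] {h : E → ℝ} {v : E}
    (hf : ConvexOn ℝ univ f) (hh : HasGradientAt h v x)
    (hmin : IsMinOn (fun z => f z - h z) univ x) : IsSubgradientAt f v x := fun z => by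
  let k : ℝ → ℝ := fun r => r * (f z - f x) - (h (AffineMap.lineMap x z r) - h x)
  have hk : HasDerivAt k (f z - f x - ⟪v, z - x⟫) 0 := by
    have hline : HasFDerivAt h (InnerProductSpace.toDual ℝ E v)
        (AffineMap.lineMap x z (0 : ℝ)) := by
      simpa using hh.hasFDerivAt
    have hcomp := hline.comp_hasDerivAt (0 : ℝ) AffineMap.hasDerivAt_lineMap
    simpa using ((hasDerivAt_id' (0 : ℝ)).mul_const (f z - f x)).fun_sub (hcomp.sub_const (h x))
  have hk_min : IsMinOn k (Icc 0 1) 0 := by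
    intro r hr
    have hconv := hf.2 (mem_univ x) (mem_univ z) (sub_nonneg.2 hr.2) hr.1 (by ring)
    have hle := isMinOn_univ_iff.1 hmin (AffineMap.lineMap x z r)
    rw [← AffineMap.lineMap_apply_module] at hconv
    simp only [smul_eq_mul] at hconv
    simp only [k, AffineMap.lineMap_apply_zero, mem_ofPred_eq]
    linarith
  have hderiv_nonneg := hk_min.localize.hasFDerivWithinAt_nonneg
    (y := 1) hk.hasFDerivAt.hasFDerivWithinAt
    (mem_posTangentConeAt_of_segment_subset (by simp [segment_eq_Icc]))
  rw [ContinuousLinearMap.toSpanSingleton_apply, one_smul, sub_nonneg] at hderiv_nonneg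
  linarith

theorem isSubgradientAt_of_hasGradientAt [CompleteSpace E] {g : E} (hf : ConvexOn ℝ univ f)
    (hg : HasGradientAt f g x) : IsSubgradientAt f g x :=
  isSubgradientAt_of_isMinOn_sub hf hg <| isMinOn_univ_iff.2 fun z => by
    rw [sub_self, sub_self]

theorem hasGradientAt_of_forall_isSubgradientAt [CompleteSpace E] {S : E → E}
    (hS : ∀ y, IsSubgradientAt f (S y) y) (hcont : ContinuousAt S y) : HasGradientAt f (S y) y := by
  have hremainder : ∀ z, ‖f z - f y - ⟪S y, z - y⟫‖ ≤ ‖‖S z - S y‖ * ‖z - y‖‖ := fun z => by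
    have hyz := hS y z
    have hzy := hS z y
    have hcs := real_inner_le_norm (S z - S y) (z - y)
    rw [← neg_sub z y, inner_neg_right] at hzy
    rw [inner_sub_left] at hcs
    rw [Real.norm_of_nonneg (by linarith), Real.norm_of_nonneg (by positivity)]
    linarith
  have hlittleO : (fun z => ‖S z - S y‖) =o[𝓝 y] fun _ => (1 : ℝ) :=
    (Asymptotics.isLittleO_one_iff ℝ).2 (tendsto_iff_norm_sub_tendsto_zero.1 hcont)
  rw [hasGradientAt_iff_isLittleO]
  refine (Asymptotics.IsBigO.of_norm_le hremainder).trans_isLittleO ?_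
  simpa using (hlittleO.mul_isBigO (Asymptotics.isBigO_refl (fun z => ‖z - y‖) (𝓝 y))).norm_right

theorem isPositive_of_hasFDerivAt_of_forall_isSubgradientAt [CompleteSpace E] {S : E → E}
    {M : E →L[ℝ] E} (hS : ∀ y, IsSubgradientAt f (S y) y) (hcont : Continuous S)
    (hM : HasFDerivAt S M y) : M.IsPositive := by
  refine M.isPositive_iff.2 ⟨fun v w => ?_, fun v => ?_⟩
  · have hgrad : ∀ z, HasFDerivAt f (innerSL ℝ (S z)) z := fun z =>
      (hasGradientAt_of_forall_isSubgradientAt hS hcont.continuousAt).hasFDerivAt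
    have hsymm := second_derivative_symmetric hgrad ((innerSL ℝ (E := E)).hasFDerivAt.comp y hM) v w
    exact (show ⟪M v, w⟫ = ⟪M w, v⟫ from hsymm).trans (real_inner_comm v (M w))
  · have hslope : Tendsto (fun s : ℝ => ⟪s⁻¹ • (S (y + s • v) - S y), v⟫) (𝓝[≠] 0)
        (𝓝 ⟪M v, v⟫) :=
      ((hM.hasLineDerivAt v).tendsto_slope_zero.congr fun s => by simp).inner tendsto_const_nhds
    refine ge_of_tendsto hslope (eventually_mem_nhdsWithin.mono fun s hs => ?_)
    have hmono := (hS (y + s • v)).inner_sub_nonneg (hS y)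
    rw [add_sub_cancel_left, real_inner_smul_right] at hmono
    calc (0 : ℝ) ≤ (s ^ 2)⁻¹ * (s * ⟪S (y + s • v) - S y, v⟫) := by positivity
      _ = ⟪s⁻¹ • (S (y + s • v) - S y), v⟫ := by
        have hs0 : s ≠ 0 := hs
        rw [real_inner_smul_left]
        field_simp

theorem tendsto_mul_norm_sq_add_cocompact_atTop [FiniteDimensional ℝ E] (hf : ConvexOn ℝ univ f)
    {b : ℝ} (hb : 0 < b) : Tendsto (fun x => b * ‖x‖ ^ 2 + f x) (cocompact E) atTop := by
  obtain ⟨l, c, hle, -⟩ := hf.exists_affine_le_of_lt (𝕜 := ℝ) (mem_univ 0) (sub_one_lt (f 0))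
    isClosed_univ (hf.continuousOn isOpen_univ).lowerSemicontinuousOn
  have hlower : ∀ x, ‖x‖ * (b * ‖x‖ - ‖l‖) + c ≤ b * ‖x‖ ^ 2 + f x := fun x => by
    have hlx : l x + c ≤ f x := hle ⟨x, mem_univ x⟩
    have hl_norm := (abs_le.1 (l.le_opNorm x)).1
    linarith
  refine tendsto_atTop_mono hlower (tendsto_atTop_add_const_right _ _ ?_)
  refine tendsto_norm_cocompact_atTop.atTop_mul_atTop₀ (tendsto_atTop_add_const_right _ _ ?_)
  exact tendsto_norm_cocompact_atTop.const_mul_atTop hb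

end ConvexAnalysis

section Resolvent

variable {E : Type*} [NormedAddCommGroup E] [InnerProductSpace ℝ E] {f : E → ℝ} {a : ℝ} {S : E → E}

/-- `S` is the resolvent `(a • id + ∂f)⁻¹`; it inverts `x ↦ a • x + g` for any selection `g` of
subgradients of `f`. -/
def IsResolvent (f : E → ℝ) (a : ℝ) (S : E → E) : Prop :=
  ∀ y, IsSubgradientAt f (y - a • S y) (S y)

theorem exists_isSubgradientAt_sub_smul [FiniteDimensional ℝ E] (hf : ConvexOn ℝ univ f)
    (ha : 0 < a) (y : E) : ∃ s, IsSubgradientAt f (y - a • s) s := by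
  have hf_tilt : ConvexOn ℝ univ fun x => f x - ⟪y, x⟫ :=
    hf.sub ((innerSL ℝ y).toLinearMap.concaveOn convex_univ)
  have hf_cont : Continuous f := continuousOn_univ.1 (hf.continuousOn isOpen_univ)
  obtain ⟨s, hs⟩ := Continuous.exists_forall_le
    (f := fun x => a / 2 * ‖x‖ ^ 2 + (f x - ⟪y, x⟫)) (by fun_prop)
    (tendsto_mul_norm_sq_add_cocompact_atTop hf_tilt (half_pos ha))
  have hgrad : HasGradientAt (fun x => ⟪y, x⟫ - a / 2 * ‖x‖ ^ 2) (y - a • s) s := by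
    rw [hasGradientAt_iff_hasFDerivAt]
    refine ((innerSL ℝ y).hasFDerivAt.fun_sub
      ((hasStrictFDerivAt_norm_sq s).hasFDerivAt.const_mul (a / 2))).congr_fderiv ?_
    ext v
    simp only [sub_apply, smul_apply, coe_innerSL_apply, nsmul_eq_mul, Nat.cast_ofNat,
      smul_eq_mul, InnerProductSpace.toDual_apply_apply, inner_sub_left, real_inner_smul_left]
    ring
  exact ⟨s, isSubgradientAt_of_isMinOn_sub hf hgrad <| isMinOn_univ_iff.2 fun z => by
    linarith [hs z]⟩

theorem exists_isResolvent [FiniteDimensional ℝ E] (hf : ConvexOn ℝ univ f) (ha : 0 < a) :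
    ∃ S, IsResolvent f a S := by
  choose S hS using exists_isSubgradientAt_sub_smul hf ha
  exact ⟨S, hS⟩

namespace IsResolvent

theorem mul_norm_sub_sq_le_inner (hS : IsResolvent f a S) (y z : E) :
    a * ‖S y - S z‖ ^ 2 ≤ ⟪y - z, S y - S z⟫ := by
  have hmono := (hS y).inner_sub_nonneg (hS z)
  rw [sub_sub_sub_comm, ← smul_sub, inner_sub_left, real_inner_smul_left,
    real_inner_self_eq_norm_sq] at hmono
  linarith

theorem lipschitzWith (hS : IsResolvent f a S) (ha : 0 < a) : LipschitzWith a⁻¹.toNNReal S := by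
  refine LipschitzWith.of_dist_le_mul fun y z => ?_
  rw [dist_eq_norm, dist_eq_norm, Real.coe_toNNReal _ (inv_nonneg.2 ha.le), inv_mul_eq_div,
    le_div_iff₀' ha]
  rcases (norm_nonneg (S y - S z)).eq_or_lt with hzero | hpos
  · simp [← hzero]
  · refine le_of_mul_le_mul_right ?_ hpos
    linarith [hS.mul_norm_sub_sq_le_inner y z, real_inner_le_norm (y - z) (S y - S z)]

theorem apply_smul_add (hS : IsResolvent f a S) (ha : 0 < a) {g x : E}
    (hg : IsSubgradientAt f g x) : S (a • x + g) = x := by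
  have hmono := (hS (a • x + g)).inner_sub_nonneg hg
  have hdiff : a • x + g - a • S (a • x + g) - g = -(a • (S (a • x + g) - x)) := by module
  rw [hdiff, inner_neg_left, real_inner_smul_left, real_inner_self_eq_norm_sq] at hmono
  have hnorm : ‖S (a • x + g) - x‖ ^ 2 = 0 := by nlinarith [sq_nonneg ‖S (a • x + g) - x‖]
  exact sub_eq_zero.1 (norm_eq_zero.1 (pow_eq_zero_iff two_ne_zero |>.1 hnorm))

/-- The potential is the Legendre transform of `f + a / 2 * ‖·‖ ^ 2`. -/
theorem isSubgradientAt_conjugate (hS : IsResolvent f a S) (ha : 0 ≤ a) (y : E) :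
    IsSubgradientAt (fun z => ⟪S z, z⟫ - f (S z) - a / 2 * ‖S z‖ ^ 2) (S y) y := fun z => by
  have hsub := hS z (S y)
  have hsq : 0 ≤ a / 2 * ‖S y - S z‖ ^ 2 := by positivity
  rw [norm_sub_sq_real] at hsq
  simp only [inner_sub_left, inner_sub_right, real_inner_smul_left, real_inner_self_eq_norm_sq,
    real_inner_comm (S _) z, real_inner_comm (S z) (S y)] at hsub hsq ⊢
  linarith

/-- The potential at `z` is `a` times the Moreau envelope of `f` of parameter `a⁻¹` at `a⁻¹ • z`. -/
theorem isSubgradientAt_moreauEnvelope (hS : IsResolvent f a S) (ha : 0 ≤ a) (y : E) :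
    IsSubgradientAt (fun z => a * f (S z) + 1 / 2 * ‖z - a • S z‖ ^ 2) (y - a • S y) y := by
  intro z
  set u := y - a • S y with hu
  set v := z - a • S z with hv
  have hsub : a * f (S y) + ⟪u, a • (S z - S y)⟫ ≤ a * f (S z) := by
    rw [real_inner_smul_right, ← mul_add]
    exact mul_le_mul_of_nonneg_left (hS y (S z)) ha
  have hdisp : a • (S z - S y) = z - y - (v - u) := by rw [hu, hv]; module
  have hsq : 0 ≤ 1 / 2 * ‖v - u‖ ^ 2 := by positivity
  rw [hdisp, inner_sub_right, inner_sub_right u v, real_inner_self_eq_norm_sq] at hsub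
  rw [norm_sub_sq_real, real_inner_comm] at hsq
  linarith

variable [CompleteSpace E] {M : E →L[ℝ] E} {y : E}

theorem isPositive_of_hasFDerivAt (hS : IsResolvent f a S) (ha : 0 < a) (hM : HasFDerivAt S M y) :
    M.IsPositive :=
  isPositive_of_hasFDerivAt_of_forall_isSubgradientAt (hS.isSubgradientAt_conjugate ha.le)
    (hS.lipschitzWith ha).continuous hM

theorem isPositive_id_sub_smul_of_hasFDerivAt (hS : IsResolvent f a S) (ha : 0 < a)
    (hM : HasFDerivAt S M y) : (ContinuousLinearMap.id ℝ E - a • M).IsPositive :=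
  isPositive_of_hasFDerivAt_of_forall_isSubgradientAt (hS.isSubgradientAt_moreauEnvelope ha.le)
    (continuous_id.sub ((hS.lipschitzWith ha).continuous.const_smul a))
    ((hasFDerivAt_id y).sub (hM.const_smul a))

end IsResolvent

end Resolvent

section Determinant

theorem det_eq_prod_of_forall_apply_basis {ι R V : Type*} [Fintype ι] [CommRing R]
    [AddCommGroup V] [Module R V] (b : Module.Basis ι R V) {M : V →ₗ[R] V} {c : ι → R}
    (hM : ∀ i, M (b i) = c i • b i) : LinearMap.det M = ∏ i, c i := by
  classical
  have hdiag : LinearMap.toMatrix b b M = Matrix.diagonal c := by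
    ext i j
    rw [LinearMap.toMatrix_apply, hM, map_smul, b.repr_self, Finsupp.smul_single, smul_eq_mul,
      mul_one, Finsupp.single_apply, Matrix.diagonal_apply]
    grind
  rw [← LinearMap.det_toMatrix b, hdiag, Matrix.det_diagonal]

variable {E : Type*} [NormedAddCommGroup E] [InnerProductSpace ℝ E] [FiniteDimensional ℝ E]
  {M N : E →ₗ[ℝ] E} {a t : ℝ}

theorem exists_det_eq_prod_of_smul_add_smul_eq_one (hM : M.IsPositive) (hN : N.IsPositive)
    (ht : t ≠ 0) (hMN : a • M + t • N = 1) :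
    ∃ l m : Fin (Module.finrank ℝ E) → ℝ, (∀ i, 0 ≤ l i) ∧ (∀ i, 0 ≤ m i) ∧
      (∀ i, a * l i + t * m i = 1) ∧ LinearMap.det M = ∏ i, l i ∧ LinearMap.det N = ∏ i, m i := by
  set b := hM.isSymmetric.eigenvectorBasis rfl
  set l := hM.isSymmetric.eigenvalues rfl
  have hMb : ∀ i, M (b i) = l i • b i := hM.isSymmetric.apply_eigenvectorBasis rfl
  have hNb : ∀ i, N (b i) = (t⁻¹ * (1 - a * l i)) • b i := fun i => by
    have happly : a • M (b i) + t • N (b i) = b i := LinearMap.congr_fun hMN (b i)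
    rw [hMb] at happly
    rw [mul_smul, eq_inv_smul_iff₀ ht, eq_sub_of_add_eq' happly]
    module
  refine ⟨l, fun i => t⁻¹ * (1 - a * l i), hM.nonneg_eigenvalues rfl, fun i => ?_, fun i => ?_,
    det_eq_prod_of_forall_apply_basis b.toBasis (by simpa using hMb),
    det_eq_prod_of_forall_apply_basis b.toBasis (by simpa using hNb)⟩
  · simpa [hNb, real_inner_smul_left] using hN.inner_nonneg_left (b i)
  · field_simp
    ring

theorem abs_det_le_one_or_abs_det_le_one (hM : M.IsPositive) (hN : N.IsPositive) (ha : 0 < a)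
    (ht : 0 < t) (hat : a + t = 1) (hMN : a • M + t • N = 1) :
    |LinearMap.det M| ≤ 1 ∨ |LinearMap.det N| ≤ 1 := by
  obtain ⟨l, m, hl, hm, hlm, hdetM, hdetN⟩ :=
    exists_det_eq_prod_of_smul_add_smul_eq_one hM hN ht.ne' hMN
  have hgeom : (∏ i, l i) ^ a * (∏ i, m i) ^ t ≤ 1 := by
    rw [← Real.finsetProd_rpow _ _ fun i _ => hl i, ← Real.finsetProd_rpow _ _ fun i _ => hm i,
      ← Finset.prod_mul_distrib]
    exact Finset.prod_le_one
      (fun i _ => mul_nonneg (Real.rpow_nonneg (hl i) a) (Real.rpow_nonneg (hm i) t)) fun i _ =>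
      (Real.geom_mean_le_arith_mean2_weighted ha.le ht.le (hl i) (hm i) hat).trans_eq (hlm i)
  rw [hdetM, hdetN, abs_of_nonneg (Finset.prod_nonneg fun i _ => hl i),
    abs_of_nonneg (Finset.prod_nonneg fun i _ => hm i)]
  by_contra! hlt
  exact hgeom.not_gt
    (one_lt_mul_of_lt_of_le (Real.one_lt_rpow hlt.1 ha) (Real.one_lt_rpow hlt.2 ht).le)

end Determinant

section Pushforward

variable {E : Type*} [NormedAddCommGroup E] [NormedSpace ℝ E] [FiniteDimensional ℝ E]
  [MeasurableSpace E] [BorelSpace E] {μ κ : Measure E} [μ.IsAddHaarMeasure] {f g : E → E}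
  {s : Set E}

theorem addHaar_image_eq_zero_of_lipschitzOnWith {K : ℝ≥0} (hf : LipschitzOnWith K f s)
    (hs : μ s = 0) : μ (f '' s) = 0 := by
  have hμ : μ ≪ μH[Module.finrank ℝ E] := Measure.absolutelyContinuous_isAddHaarMeasure _ _
  have hH : μH[Module.finrank ℝ E] ≪ μ := Measure.absolutelyContinuous_isAddHaarMeasure _ _
  refine hμ (le_antisymm ((hf.hausdorffMeasure_image_le (by positivity)).trans_eq ?_) bot_le)
  rw [hH hs, mul_zero]

theorem absolutelyContinuous_of_map_lipschitzWith {K : ℝ≥0} (hf : LipschitzWith K f)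
    (hmap : κ.map f ≪ μ) : κ ≪ μ := fun s hs =>
  le_antisymm ((Measure.le_map_apply_image hf.continuous.aemeasurable s).trans_eq
    (hmap (addHaar_image_eq_zero_of_lipschitzOnWith hf.lipschitzOnWith hs))) bot_le

theorem addHaar_image_le_of_abs_det_fderiv_le_one (hs : MeasurableSet s)
    (hf : ∀ x ∈ s, DifferentiableAt ℝ f x) (hdet : ∀ x ∈ s, |(fderiv ℝ f x).det| ≤ 1) :
    μ (f '' s) ≤ μ s :=
  calc μ (f '' s) ≤ ∫⁻ x in s, ENNReal.ofReal |(fderiv ℝ f x).det| ∂μ :=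
        addHaar_image_le_lintegral_abs_det_fderiv μ hs fun x hx =>
          (hf x hx).hasFDerivAt.hasFDerivWithinAt
    _ ≤ ∫⁻ _ in s, 1 ∂μ :=
        setLIntegral_mono measurable_const fun x hx => ENNReal.ofReal_le_one.2 (hdet x hx)
    _ = μ s := setLIntegral_one s

/-- The set on which `f` is differentiable and infinitesimally does not increase volume. -/
def volumeNonincreasingSet (f : E → E) : Set E :=
  {x | DifferentiableAt ℝ f x ∧ |(fderiv ℝ f x).det| ≤ 1}

theorem measurableSet_volumeNonincreasingSet (f : E → E) :
    MeasurableSet (volumeNonincreasingSet f) :=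
  (measurableSet_of_differentiableAt ℝ f).inter <| measurableSet_le
    (ContinuousLinearMap.continuous_det.measurable.comp (measurable_fderiv ℝ f)).abs
    measurable_const

theorem measure_le_of_map_le_of_subset_volumeNonincreasingSet {c : ℝ≥0∞} (hf : AEMeasurable f κ)
    (hmap : κ.map f ≤ c • μ) (hs : MeasurableSet s) (hsub : s ⊆ volumeNonincreasingSet f) :
    κ s ≤ (c • μ) s :=
  calc κ s ≤ κ.map f (f '' s) := Measure.le_map_apply_image hf s
    _ ≤ c * μ (f '' s) := hmap _
    _ ≤ c * μ s := by
        exact mul_le_mul_right (addHaar_image_le_of_abs_det_fderiv_le_one hs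
          (fun x hx => (hsub hx).1) fun x hx => (hsub hx).2) c

theorem le_smul_of_map_le_of_map_le {c : ℝ≥0∞} (hκ : κ ≪ μ) (hf : AEMeasurable f κ)
    (hg : AEMeasurable g κ) (hmapf : κ.map f ≤ c • μ) (hmapg : κ.map g ≤ c • μ)
    (hcover : ∀ᵐ x ∂μ, x ∈ volumeNonincreasingSet f ∪ volumeNonincreasingSet g) :
    κ ≤ c • μ := by
  refine Measure.le_iff.2 fun A hA => ?_
  set P := volumeNonincreasingSet f
  set Q := volumeNonincreasingSet g
  have hP : MeasurableSet P := measurableSet_volumeNonincreasingSet f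
  have hQ : MeasurableSet Q := measurableSet_volumeNonincreasingSet g
  have hQ_ae : κ (A \ P) ≤ κ ((A \ P) ∩ Q) := measure_mono_ae <| by
    filter_upwards [hκ hcover] with x hx hxA
    exact ⟨hxA, hx.resolve_left hxA.2⟩
  calc κ A = κ (A ∩ P) + κ (A \ P) := (measure_inter_add_sdiff A hP).symm
    _ ≤ κ (A ∩ P) + κ ((A \ P) ∩ Q) := by gcongr
    _ ≤ (c • μ) (A ∩ P) + (c • μ) ((A \ P) ∩ Q) := add_le_add
        (measure_le_of_map_le_of_subset_volumeNonincreasingSet hf hmapf (hA.inter hP)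
          inter_subset_right)
        (measure_le_of_map_le_of_subset_volumeNonincreasingSet hg hmapg ((hA.diff hP).inter hQ)
          inter_subset_right)
    _ ≤ (c • μ) (A ∩ P) + (c • μ) (A \ P) := by gcongr; exact inter_subset_left
    _ = (c • μ) A := measure_inter_add_sdiff A hP

end Pushforward

section Interpolation

variable {E : Type*} [NormedAddCommGroup E] [InnerProductSpace ℝ E] [FiniteDimensional ℝ E]
  [MeasurableSpace E] [BorelSpace E]

theorem IsResolvent.ae_mem_volumeNonincreasingSet {f : E → ℝ} {S : E → E} {a t : ℝ}
    (hS : IsResolvent f a S) (ha : 0 < a) (ht : 0 < t) (hat : a + t = 1) :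
    ∀ᵐ y, y ∈ volumeNonincreasingSet S ∪ volumeNonincreasingSet fun y => t⁻¹ • (y - a • S y) := by
  filter_upwards [(hS.lipschitzWith ha).ae_differentiableAt] with y hy
  have hN : HasFDerivAt (fun y => t⁻¹ • (y - a • S y))
      (t⁻¹ • (ContinuousLinearMap.id ℝ E - a • fderiv ℝ S y)) y :=
    ((hasFDerivAt_id y).sub (hy.hasFDerivAt.const_smul a)).const_smul t⁻¹
  have hpos := (hS.isPositive_id_sub_smul_of_hasFDerivAt ha hy.hasFDerivAt).smul_of_nonneg
    (inv_nonneg.2 ht.le)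
  have hsum : a • (fderiv ℝ S y : E →ₗ[ℝ] E)
      + t • ((t⁻¹ • (ContinuousLinearMap.id ℝ E - a • fderiv ℝ S y) : E →L[ℝ] E) : E →ₗ[ℝ] E)
      = 1 := by
    ext v
    simp [ht.ne']
  refine (abs_det_le_one_or_abs_det_le_one (hS.isPositive_of_hasFDerivAt ha hy.hasFDerivAt)
    hpos ha ht hat hsum).imp (fun hdet => ⟨hy, hdet⟩) fun hdet => ⟨hN.differentiableAt, ?_⟩
  rw [hN.fderiv]
  exact hdet

theorem map_smul_add_smul_le {μ : Measure E} {c : ℝ≥0∞} {ψ : E → ℝ} {T : E → E} {a t : ℝ}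
    (hψ : ConvexOn ℝ univ ψ) (hT : AEMeasurable T μ) (hsub : ∀ᵐ x ∂μ, IsSubgradientAt ψ (T x) x)
    (hμ : μ ≤ c • volume) (hmap : μ.map T ≤ c • volume) (ha : 0 < a) (ht : 0 < t)
    (hat : a + t = 1) : μ.map (fun x => a • x + t • T x) ≤ c • volume := by
  obtain ⟨S, hS⟩ := exists_isResolvent (f := fun x => t * ψ x) (by simpa using hψ.smul ht.le) ha
  have hS_cont : Continuous S := (hS.lipschitzWith ha).continuous
  let R : E → E := fun y => t⁻¹ • (y - a • S y)
  have hR_cont : Continuous R := by fun_prop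
  have hI : AEMeasurable (fun x => a • x + t • T x) μ := by fun_prop
  have hSI : ∀ᵐ x ∂μ, S (a • x + t • T x) = x :=
    hsub.mono fun x hx => hS.apply_smul_add ha (hx.const_mul ht.le)
  have hRI : ∀ᵐ x ∂μ, R (a • x + t • T x) = T x := hSI.mono fun x hx => by
    simp only [R, hx, add_sub_cancel_left, inv_smul_smul₀ ht.ne']
  have hmapS : (μ.map fun x => a • x + t • T x).map S = μ := by
    rw [AEMeasurable.map_map_of_aemeasurable hS_cont.aemeasurable hI]
    exact (Measure.map_congr hSI).trans Measure.map_id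
  have hmapR : (μ.map fun x => a • x + t • T x).map R = μ.map T := by
    rw [AEMeasurable.map_map_of_aemeasurable hR_cont.aemeasurable hI]
    exact Measure.map_congr hRI
  exact le_smul_of_map_le_of_map_le
    (absolutelyContinuous_of_map_lipschitzWith (hS.lipschitzWith ha)
      (hmapS.symm ▸ Measure.absolutelyContinuous_of_le_smul hμ))
    hS_cont.aemeasurable hR_cont.aemeasurable (hmapS.trans_le hμ) (hmapR.trans_le hmap)
    (hS.ae_mem_volumeNonincreasingSet ha ht hat)

theorem displacement_interpolant_density_le_one_general {μ : Measure E} {c : ℝ≥0∞} {ψ : E → ℝ}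
    {T : E → E} (hψ : ConvexOn ℝ univ ψ) (hT : AEMeasurable T μ)
    (hsub : ∀ᵐ x ∂μ, IsSubgradientAt ψ (T x) x) (hμ : μ ≤ c • volume)
    (hmap : μ.map T ≤ c • volume) {t : ℝ} (ht : t ∈ Icc (0 : ℝ) 1) :
    μ.map (fun x => (1 - t) • x + t • T x) ≤ c • volume := by
  rcases ht.1.eq_or_lt with rfl | ht0
  · simpa using hμ
  rcases ht.2.eq_or_lt with rfl | ht1
  · simpa using hmap
  exact map_smul_add_smul_le hψ hT hsub hμ hmap (sub_pos.2 ht1) ht0 (sub_add_cancel 1 t)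

end Interpolation

theorem withDensity_ofReal_le {α : Type*} [MeasurableSpace α] (μ : Measure α) {ρ : α → ℝ}
    (hρ : ∀ x, ρ x ≤ 1) : μ.withDensity (fun x => ENNReal.ofReal (ρ x)) ≤ μ :=
  (withDensity_mono (Eventually.of_forall fun x => ENNReal.ofReal_le_one.2 (hρ x))).trans_eq
    withDensity_one

end

/-- Along the displacement interpolant between two densities with values
in `[0,1]` (via the Brenier map `T = ∇ψ`), the interpolated measure
`μ_t = ((1−t)·id + t·T)_#(ρ₀ dx)` satisfies `μ_t(A) ≤ |A|` for every Borel set `A`. -/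
theorem displacement_interpolant_density_le_one
    (d : ℕ) (ρ₀ ρ₁ : EuclideanSpace ℝ (Fin d) → ℝ)
    (h₀meas : Measurable ρ₀) (h₁meas : Measurable ρ₁)
    (h₀range : ∀ x, ρ₀ x ∈ Icc (0:ℝ) 1) (h₁range : ∀ x, ρ₁ x ∈ Icc (0:ℝ) 1)
    (h₀supp : HasCompactSupport ρ₀) (h₁supp : HasCompactSupport ρ₁)
    (hint : ∫ x, ρ₀ x = ∫ x, ρ₁ x) (hposint : 0 < ∫ x, ρ₀ x)
    (ψ : EuclideanSpace ℝ (Fin d) → ℝ) (hψconv : ConvexOn ℝ Set.univ ψ)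
    (T : EuclideanSpace ℝ (Fin d) → EuclideanSpace ℝ (Fin d)) (hT : Measurable T)
    (hgrad : ∀ᵐ x, HasGradientAt ψ (T x) x)
    (hpush :
      (volume.withDensity fun x => ENNReal.ofReal (ρ₀ x)).map T =
        volume.withDensity fun x => ENNReal.ofReal (ρ₁ x)) :
    ∀ t ∈ Icc (0:ℝ) 1, ∀ A : Set (EuclideanSpace ℝ (Fin d)), MeasurableSet A →
      ((volume.withDensity fun x => ENNReal.ofReal (ρ₀ x)).map
          (fun x => (1 - t) • x + t • T x)) A ≤ volume A := by
  intro t ht A _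
  have hac := (withDensity_absolutelyContinuous volume fun x => ENNReal.ofReal (ρ₀ x)).ae_le
  simpa using displacement_interpolant_density_le_one_general (c := 1) hψconv hT.aemeasurable
    ((hgrad.filter_mono hac).mono fun x => isSubgradientAt_of_hasGradientAt hψconv)
    (by simpa using withDensity_ofReal_le volume fun x => (h₀range x).2)
    (by simpa [hpush] using withDensity_ofReal_le volume fun x => (h₁range x).2) ht A
end
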